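/- The group Aut₃(D₄) = {φ|₃ : φ an order automorphism of D₄} is isomorphic to the semidirect product ((ZMod 2)⁴ × Perm(Bool × Bool)) ⋊_α (ZMod 2), where α(1) sends (p,q,r,s,π) to (q,p,s,r, σ∘π∘σ) with σ the permutation of Bool × Bool given by σ(a,b) = (b,a). Moreover, there are at most four elements of Aut₃(D₄) that fix every digraph with at most 2 vertices. -/

import Mathlib

/-- A finite digraph: a finite nonempty vertex set `Fin n` with a (Bool-valued)
edge relation, loops allowed. -/
structure FinDigraph where
  n : ℕ
  pos : 0 < n
  adj : Fin n → Fin n → Bool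

namespace FinDigraph

/-- Isomorphism of finite digraphs. -/
def Iso (G H : FinDigraph) : Prop :=
  ∃ e : Fin G.n ≃ Fin H.n, ∀ u v, H.adj (e u) (e v) = G.adj u v

theorem iso_refl (G : FinDigraph) : Iso G G := ⟨Equiv.refl _, fun _ _ => rfl⟩

theorem iso_symm {G H : FinDigraph} (h : Iso G H) : Iso H G := by
  obtain ⟨e, he⟩ := h
  refine ⟨e.symm, fun u v => ?_⟩
  rw [← he (e.symm u) (e.symm v), e.apply_symm_apply, e.apply_symm_apply]

theorem iso_trans {G H K : FinDigraph} (hGH : Iso G H) (hHK : Iso H K) : Iso G K := by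
  obtain ⟨e, he⟩ := hGH
  obtain ⟨f, hf⟩ := hHK
  exact ⟨e.trans f, fun u v => (hf (e u) (e v)).trans (he u v)⟩

instance isoSetoid : Setoid FinDigraph :=
  ⟨Iso, iso_refl, fun h => iso_symm h, fun h h' => iso_trans h h'⟩

/-- `Emb G H` : `G` is isomorphic to an induced subdigraph of `H`. -/
def Emb (G H : FinDigraph) : Prop :=
  ∃ f : Fin G.n ↪ Fin H.n, ∀ u v, H.adj (f u) (f v) = G.adj u v

end FinDigraph

/-- `D`: the isomorphism classes of finite digraphs. -/
def D : Type := Quotient FinDigraph.isoSetoid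

/-- The isomorphism class of a finite digraph. -/
def toD (G : FinDigraph) : D := Quotient.mk _ G

/-- The substructure (induced subdigraph) ordering `⊑` on `D`. -/
instance : LE D :=
  ⟨fun x y => ∃ G H : FinDigraph, x = toD G ∧ y = toD H ∧ FinDigraph.Emb G H⟩

/-- An order automorphism: a bijection such that `x ≤ y ↔ f x ≤ f y`. -/
def IsOrderAuto {α : Type*} [LE α] (f : α → α) : Prop :=
  Function.Bijective f ∧ ∀ x y : α, x ≤ y ↔ f x ≤ f y

/-- φ₁ on digraphs: complement the loop status of every vertex. -/
def phi1Fn (G : FinDigraph) : FinDigraph :=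
  ⟨G.n, G.pos, fun u v => if u = v then !(G.adj u v) else G.adj u v⟩

/-- Edge reversal: transpose the edge relation. -/
def revFn (G : FinDigraph) : FinDigraph :=
  ⟨G.n, G.pos, fun u v => G.adj v u⟩

/-- φ₂ on digraphs: toggle both edges between distinct loopless vertices joined
by both or neither of the two possible edges. -/
def phi2Fn (G : FinDigraph) : FinDigraph :=
  ⟨G.n, G.pos, fun u v =>
    if u ≠ v ∧ G.adj u u = false ∧ G.adj v v = false ∧ G.adj u v = G.adj v u then
      !(G.adj u v)
    else G.adj u v⟩

/-- φ₃ on digraphs: toggle both edges between distinct looped vertices joined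
by both or neither of the two possible edges. -/
def phi3Fn (G : FinDigraph) : FinDigraph :=
  ⟨G.n, G.pos, fun u v =>
    if u ≠ v ∧ G.adj u u = true ∧ G.adj v v = true ∧ G.adj u v = G.adj v u then
      !(G.adj u v)
    else G.adj u v⟩

/-- φ₄ on digraphs: reverse the single edge between distinct loopless vertices
joined by exactly one of the two possible edges. -/
def phi4Fn (G : FinDigraph) : FinDigraph :=
  ⟨G.n, G.pos, fun u v =>
    if u ≠ v ∧ G.adj u u = false ∧ G.adj v v = false ∧ G.adj u v ≠ G.adj v u then
      G.adj v u
    else G.adj u v⟩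

/-- φ₅ on digraphs: reverse the single edge between distinct looped vertices
joined by exactly one of the two possible edges. -/
def phi5Fn (G : FinDigraph) : FinDigraph :=
  ⟨G.n, G.pos, fun u v =>
    if u ≠ v ∧ G.adj u u = true ∧ G.adj v v = true ∧ G.adj u v ≠ G.adj v u then
      G.adj v u
    else G.adj u v⟩

/-- φ_π on digraphs: for each ordered pair `(u,v)` of distinct vertices with a loop at
`u` and no loop at `v`, replace its type `(Adj(u,v), Adj(v,u)) : Bool × Bool` by `π`
applied to it; everything else is unchanged. -/
def phiPiFn (π : Equiv.Perm (Bool × Bool)) (G : FinDigraph) : FinDigraph :=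
  ⟨G.n, G.pos, fun u v =>
    if u = v then G.adj u v
    else if G.adj u u = true ∧ G.adj v v = false then (π (G.adj u v, G.adj v u)).1
    else if G.adj u u = false ∧ G.adj v v = true then (π (G.adj v u, G.adj u v)).2
    else G.adj u v⟩

/-- The number of vertices of an isomorphism class. -/
def nVerts : D → ℕ :=
  Quotient.lift (fun G : FinDigraph => G.n) (fun _ _ h => by
    obtain ⟨e, -⟩ := h
    simpa using Fintype.card_congr e)

/-- `Dn n`: the classes of digraphs with at most `n` vertices (first `n` levels). -/
def Dn (n : ℕ) : Set D := {x : D | nVerts x ≤ n}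

theorem mem_Dn_succ {n : ℕ} {x : D} (h : x ∈ Dn n) : x ∈ Dn (n + 1) :=
  le_trans h (Nat.le_succ n)

/-- The set of lower covers of `x` in `(D, ⊑)`. -/
def lcov (x : D) : Set D :=
  {y : D | y ≤ x ∧ y ≠ x ∧ ∀ z : D, y ≤ z → z ≤ x → z = y ∨ z = x}

/-- `scount x` = number of classes sharing the lower-cover set of `x`. -/
noncomputable def scount (x : D) : ℕ := Nat.card {y : D // lcov y = lcov x}

/-- `Hset m` = `{(l(G), s(G)) : G ∈ D with exactly m vertices}`. -/
def Hset (m : ℕ) : Set (Set D × ℕ) :=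
  {p : Set D × ℕ | ∃ x : D, nVerts x = m ∧ p = (lcov x, scount x)}

/-- Element-wise action of a map of `Dn n` on a subset of `Dn n`. -/
def setImage {n : ℕ} (φ : ↥(Dn n) → ↥(Dn n)) (S : Set D) : Set D :=
  {z : D | ∃ (y : D) (h : y ∈ Dn n), y ∈ S ∧ z = ↑(φ ⟨y, h⟩)}

/-- Element-wise action of a map of `Dn n` on a set of pairs `(S, k)`. -/
def HsetImage {n : ℕ} (φ : ↥(Dn n) → ↥(Dn n)) (A : Set (Set D × ℕ)) : Set (Set D × ℕ) :=
  {p : Set D × ℕ | ∃ q ∈ A, p = (setImage φ q.1, q.2)}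

/-- The swap permutation `σ(a,b) = (b,a)` of `Bool × Bool`. -/
def sigmaSwap : Equiv.Perm (Bool × Bool) := Equiv.prodComm Bool Bool

/-- Restrictions to `D₃` of order automorphisms of `(D, ⊑)`. -/
def Aut3D : Set (↥(Dn 3) → ↥(Dn 3)) :=
  {g | ∃ φ : D → D, IsOrderAuto φ ∧ ∀ x : ↥(Dn 3), (↑(g x) : D) = φ ↑x}

/-- Restrictions to `D₃` of order automorphisms of `D₄`. -/
def Aut3D4 : Set (↥(Dn 3) → ↥(Dn 3)) :=
  {g | ∃ ψ : ↥(Dn 4) → ↥(Dn 4), IsOrderAuto ψ ∧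
    ∀ x : ↥(Dn 3), (↑(g x) : D) = ↑(ψ ⟨↑x, mem_Dn_succ x.2⟩)}

/-- Restrictions to `D₃` of order automorphisms of `D₄`, as order isomorphisms of `D₃`. -/
def Aut3D4Iso : Set (↥(Dn 3) ≃o ↥(Dn 3)) :=
  {g | ∃ ψ : ↥(Dn 4) → ↥(Dn 4), IsOrderAuto ψ ∧
    ∀ x : ↥(Dn 3), ((g x : ↥(Dn 3)) : D) = ↑(ψ ⟨↑x, mem_Dn_succ x.2⟩)}


namespace PF

/-- rebuild a code from selected bits -/
def enc : List ℕ → ℕ → ℕ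
  | [], _ => 0
  | k :: l, X => (X >>> k) % 2 + 2 * enc l X

def T2 (c : ℕ) : ℕ := (17848809384559391248 >>> (4 * c)) % 16

def T3tab : ℕ := 13989277322566099093871011721917162033759539162920357238805530201620100781850047963214357730492930769889092317378935402355006627244759319122560296633685126776316500028438909715483945529536088554864349418572926171589405641251388160143550812877036725682599453444789602208925030668157993792733765561822017563332695909363536046561659109563184261869437074760187390842799982214587845292333589648102215093928813501537406431309653071444084850876011877494090326402717819632665263141794271738170025212092996702788973664894743939415790330413488366705091181887642273388523846213452267564800988585308314374347864094881594104760768807856395546925713156922695027661964501174930612030736682316303334390487941513918142231273056784342981268761491910289869967629601912418231357300539270616831027431782420049093199176127423158295049597942138978717839873605428543964391549044636190570282634360996674845501136514252665078696720041750735513091439383773915253218278028953569917833459005328285193365546278328441874289686865566172230779854012760551090612621489870087858799747057570810356066131295919763353804735302476042358779375661427135092865933955115763244599500725381398806666610005125951130648837752289283458426279010038276939768859068527412070286706286852440453014166921996941719423916432031231993345869517223731605801115043976066991880878166932133375259735975315580437327662766568737157687481231713495417344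

def T3 (c : ℕ) : ℕ := (T3tab >>> (9 * c)) % 512

def Mtab : ℕ := 5453824221993143902178838766302645201011960679975395245287632126924944980544503973105518850254412548931115136745140377282414132360888853061769354778381950066962945967972915236953467645999771181018436085592530521854556054489592336170601489392402483049808731849166063367235063677998798147583388877836750446174686797550793525095118293539792238081697669649754969460154632563824367428758065054929349433258358607020399741608952639541491587191357807442093133343646829090430816330009198716347080123831359043472278770089241535867571638277225720856888810408782407915344089046283834846695754030603842513106686582694130685131992735317219317369595730845100452836274265629218556730241358064234674778183254410945793258282419566989782517803422808853548004364719077946990944191399685350238067924034574364784012067060724984768031976626499308370754152974379228403446569287793690851710812535249020263037418949837418669810422912441974070199624419848640486560250541157715800345183112454904598228477926453483963549328518830363921924053945577876974726172002458018980510176212709909914925285293616085892452966019148743823076962795037188183591473872833430010830036872678606585141626183691671273914860741110020826078892050963003783967483265743993653408850756736330513063474334838021884493392591226627041338113040271923235882807266011700744543532258689547082433360165313426337678175101010200842250640692937163441184296963371766950763899501927022323935894843692368410491107268743843422874807853945308792760806716822833447935085795861653278595531937368381863905079672237460822698033263475091734422545590509434388880752202261012127341853876684994615090153594888202138345731575577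28563652000998275311930078507290823468670075631430004148190868938657299343859098244906405443280642421990730768227653185211852743023972480225040888517722818504310721860947667787845158088548728136607643949241307498477290976581349237296608916520110527207404439541341725833228632219696567061525410239430257950567244968057268709803017755147140343655840862178040534269310588629170845762743607665160312481423318314981976753589993626256286921923825878857126768607935417682146536709388889259440937442669245703270789215374718620188067527718006955772905922664649217599770234873700919172706670811013069697752282989005476047077411021922014404377932866877111811052484087341741135833873722439248258928212558203216286775402115551111754991862675087793984253093723171584585600473298897217190755327058203097686388781576215752726743810049

def M (c : ℕ) : ℕ := (Mtab >>> (16 * c)) % 65536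

def C3 : List ℕ := [0, 1, 2, 3, 5, 6, 7, 9, 11, 15, 18, 19, 20, 21, 22, 23, 24, 25, 26, 27, 28, 29, 30, 31, 48, 49, 50, 51, 53, 54, 55, 57, 59, 63, 69, 70, 71, 73, 74, 75, 77, 78, 79, 86, 87, 88, 89, 90, 91, 92, 93, 94, 95, 98, 99, 101, 102, 103, 105, 107, 109, 110, 111, 116, 117, 118, 119, 121, 122, 123, 124, 125, 126, 127, 201, 203, 207, 217, 218, 219, 221, 222, 223, 246, 247, 249, 251, 255, 265, 267, 271, 283, 285, 287, 313, 315, 319, 335, 351, 363, 367, 381, 383, 511]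

def stepsL : List (ℕ × ℕ) := [(2, 9), (6, 1), (18, 9), (26, 1), (27, 73), (28, 1), (29, 82), (30, 1), (48, 67), (49, 2), (50, 1), (53, 2), (54, 3), (55, 2), (70, 4), (74, 4), (75, 1), (77, 1), (78, 4), (86, 1), (91, 1), (93, 1), (98, 76), (99, 2), (102, 10), (103, 2), (107, 1), (109, 1), (110, 4), (116, 2), (117, 2), (118, 1), (123, 1), (125, 1), (219, 1), (221, 1), (267, 1), (271, 1), (283, 1), (285, 1), (313, 3), (315, 1), (319, 3), (335, 1), (351, 1), (363, 10), (367, 3), (381, 2), (383, 1), (20, 9)]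

def Ml (c : ℕ) : ℕ :=
  2 ^ T2 (enc [3, 5, 7, 8] c) ||| (2 ^ T2 (enc [0, 4, 6, 8] c) ||| 2 ^ T2 (enc [0, 1, 2, 3] c))

def ballB (f : ℕ → Bool) : ℕ → Bool
  | 0 => true
  | n + 1 => f n && ballB f n

theorem ballB_spec {f : ℕ → Bool} {n : ℕ} (h : ballB f n = true) : ∀ m < n, f m = true := by
  induction n with
  | zero => intro m hm; omega
  | succ k ih =>
    simp only [ballB, Bool.and_eq_true] at h
    intro m hm
    rcases Nat.lt_succ_iff_lt_or_eq.mp hm with h1 | h1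
    · exact ih h.2 m h1
    · rw [h1]; exact h.1

/-- the six reindexings of a 3-vertex code -/
def PL3 : List (List ℕ) := [[0, 1, 2, 3, 4, 5, 6, 7, 8], [0, 4, 6, 8, 1, 7, 2, 5, 3],
  [3, 2, 1, 0, 5, 4, 7, 6, 8], [3, 5, 7, 8, 2, 6, 1, 4, 0], [8, 6, 4, 0, 7, 1, 5, 2, 3],
  [8, 7, 5, 3, 6, 2, 4, 1, 0]]

def PL2 : List (List ℕ) := [[0, 1, 2, 3], [3, 2, 1, 0]]

def memC (c : ℕ) (l : List ℕ) : Bool := l.any (fun d => Nat.beq c d)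

theorem T3_check : ballB (fun c => PL3.all (fun p => Nat.beq (T3 (enc p c)) (T3 c)) &&
    (PL3.any (fun p => Nat.beq (enc p c) (T3 c)) && (Nat.beq (M c) (Ml c) &&
      (Nat.beq (T3 (T3 c)) (T3 c) && (memC (T3 c) C3 && Nat.beq (M (T3 c)) (M c)))))) 512 = true := by
  decide +kernel

theorem T2_check : ballB (fun c => PL2.all (fun p => Nat.beq (T2 (enc p c)) (T2 c)) &&
    (PL2.any (fun p => Nat.beq (enc p c) (T2 c)) && (Nat.beq (T2 (T2 c)) (T2 c)))) 16 = true := by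
  decide +kernel

theorem C3_check : C3.all (fun c => Nat.beq (T3 c) c && Nat.ble c 511) = true := by decide +kernel

def compat (R : List ℕ) (c x : ℕ) : Bool :=
  match memC c R with
  | true => Nat.beq x c
  | false => Nat.beq (M x) (M c)

def force (f : ℕ → Bool) (n : ℕ) : Bool :=
  Nat.rec (f 0) (fun k _ => f (Nat.succ k)) n

theorem force_eq (f : ℕ → Bool) (n : ℕ) : force f n = f n := by
  cases n <;> rfl

def okB (R : List ℕ) (d : List ℕ) (D : List ℕ) : Bool :=
  D.all (force (fun x => d.any (fun c => compat R c x))) && d.all (fun c => D.any (fun x => compat R c x))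

def dk (X : ℕ) : List ℕ :=
  [T3 (enc [3, 5, 7, 8, 10, 11, 13, 14, 15] X), T3 (enc [0, 4, 6, 8, 9, 11, 12, 14, 15] X),
    T3 (enc [0, 1, 2, 3, 9, 10, 12, 13, 15] X), T3 (enc [0, 1, 2, 3, 4, 5, 6, 7, 8] X)]

def stepB (R : List ℕ) (t r : ℕ) : Bool :=
  memC t (dk (t + 512 * r)) && C3.all (fun e => Nat.beq e t || (!(Nat.beq (M e) (M t)) ||
    ballB (force (fun q => force (fun Y => !(okB R (dk (t + 512 * r)) (dk Y))) (e + 512 * q))) 128))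

def runB : List (ℕ × ℕ) → List ℕ → Bool
  | [], R => C3.all (fun c => C3.all (fun e => compat R c e == Nat.beq e c))
  | p :: s, R => stepB R p.1 p.2 && runB s (p.1 :: R)

theorem run_check : runB stepsL [22, 287] = true := by decide +kernel

theorem tourn_check : [0, 6, 9, 15].all (fun d => ballB (fun c => !(Nat.beq (M c) (2 ^ d)) ||
    C3.all (fun e => !(Nat.beq (M e) (2 ^ d)) || Nat.beq e (T3 c))) 512) = true := by
  decide +kernel

theorem T3_lt (c : ℕ) : T3 c < 512 := by
  unfold T3; generalize T3tab = t; exact Nat.mod_lt _ (by norm_num)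

theorem T2_lt (c : ℕ) : T2 c < 16 := by
  unfold T2; exact Nat.mod_lt _ (by norm_num)

attribute [irreducible] T3tab Mtab T3 T2 M

end PF

namespace PF

open FinDigraph

/-! ### the order on `D` -/

theorem toD_eq {G H : FinDigraph} : toD G = toD H ↔ Iso G H :=
  ⟨fun h => Quotient.exact h, fun h => Quotient.sound h⟩

theorem emb_of_iso {G H : FinDigraph} (h : Iso G H) : Emb G H := by
  obtain ⟨e, he⟩ := h
  exact ⟨e.toEmbedding, he⟩

theorem emb_trans {G H K : FinDigraph} (h : Emb G H) (h' : Emb H K) : Emb G K := by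
  obtain ⟨e, he⟩ := h
  obtain ⟨f, hf⟩ := h'
  exact ⟨e.trans f, fun u v => (hf (e u) (e v)).trans (he u v)⟩

theorem toD_le {G H : FinDigraph} : toD G ≤ toD H ↔ Emb G H := by
  constructor
  · rintro ⟨G', H', h1, h2, h⟩
    exact emb_trans (emb_of_iso (toD_eq.1 h1)) (emb_trans h (emb_of_iso (toD_eq.1 h2.symm)))
  · intro h
    exact ⟨G, H, rfl, rfl, h⟩

theorem nVerts_toD (G : FinDigraph) : nVerts (toD G) = G.n := rfl

theorem exists_rep (x : D) : ∃ G, x = toD G := by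
  obtain ⟨G, h⟩ := Quotient.exists_rep x
  exact ⟨G, h.symm⟩

theorem emb_n_le {G H : FinDigraph} (h : Emb G H) : G.n ≤ H.n := by
  obtain ⟨f, -⟩ := h
  simpa using Fintype.card_le_of_embedding f

theorem iso_of_emb {G H : FinDigraph} (h : Emb G H) (hn : H.n ≤ G.n) : Iso G H := by
  have h1 := emb_n_le h
  obtain ⟨f, hf⟩ := h
  have hb : Function.Bijective f :=
    (Fintype.bijective_iff_injective_and_card f).2 ⟨f.injective, by simp; omega⟩
  exact ⟨Equiv.ofBijective f hb, hf⟩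

theorem nVerts_mono {x y : D} (h : x ≤ y) : nVerts x ≤ nVerts y := by
  obtain ⟨G, H, rfl, rfl, h⟩ := h
  exact emb_n_le h

theorem eq_of_le {x y : D} (h : x ≤ y) (hn : nVerts y ≤ nVerts x) : x = y := by
  obtain ⟨G, H, rfl, rfl, h⟩ := h
  exact toD_eq.2 (iso_of_emb h hn)

theorem nVerts_pos (x : D) : 1 ≤ nVerts x := by
  obtain ⟨G, rfl⟩ := exists_rep x
  exact G.pos

/-! ### codes -/

def mk (n c : ℕ) : FinDigraph :=
  ⟨n + 1, Nat.succ_pos n, fun i j => c.testBit (Nat.pair i.1 j.1)⟩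

def P (n c : ℕ) : D := toD (mk n c)

theorem nVerts_P (n c : ℕ) : nVerts (P n c) = n + 1 := rfl

theorem pair_lt {n i j : ℕ} (hi : i < n) (hj : j < n) : Nat.pair i j < n * n := by
  have h := Nat.pair_lt_max_add_one_sq i j
  have h2 : max i j + 1 ≤ n := by
    rcases le_total i j with h | h <;> simp [h] <;> omega
  have h3 := Nat.mul_le_mul h2 h2
  rw [pow_two] at h
  omega

theorem exists_code (n : ℕ) (a : Fin (n + 1) → Fin (n + 1) → Bool) :
    ∃ c < 2 ^ ((n + 1) * (n + 1)), ∀ i j, c.testBit (Nat.pair i.1 j.1) = a i j := by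
  refine ⟨Nat.ofBits (n := (n + 1) * (n + 1)) (fun k =>
    if h : (Nat.unpair k.1).1 < n + 1 ∧ (Nat.unpair k.1).2 < n + 1 then
      a ⟨_, h.1⟩ ⟨_, h.2⟩ else false), Nat.ofBits_lt_two_pow _, fun i j => ?_⟩
  rw [Nat.testBit_ofBits_lt _ _ (pair_lt i.2 j.2)]
  have hi := i.2
  have hj := j.2
  simp only [Nat.unpair_pair, hi, hj, and_self, dite_true]

theorem exists_P {n : ℕ} {x : D} (h : nVerts x = n + 1) :
    ∃ c < 2 ^ ((n + 1) * (n + 1)), x = P n c := by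
  obtain ⟨G, rfl⟩ := exists_rep x
  obtain ⟨m, hm, a⟩ := G
  have h' : m = n + 1 := h
  subst h'
  obtain ⟨c, hc, h⟩ := exists_code n a
  exact ⟨c, hc, toD_eq.2 ⟨Equiv.refl _, fun u v => h u v⟩⟩

theorem testBit_enc (l : List ℕ) (X j : ℕ) (hj : j < l.length) :
    (enc l X).testBit j = X.testBit (l[j]) := by
  induction l generalizing j with
  | nil => simp at hj
  | cons k l ih =>
    cases j with
    | zero =>
      simp [enc, Nat.testBit_eq_decide_div_mod_eq, Nat.shiftRight_eq_div_pow]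
    | succ j =>
      have : ((X >>> k) % 2 + 2 * enc l X) / 2 = enc l X := by omega
      simp only [enc, Nat.testBit_succ, this, List.getElem_cons_succ]
      exact ih j (by simpa using hj)

theorem enc_lt (l : List ℕ) (X : ℕ) : enc l X < 2 ^ l.length := by
  induction l with
  | nil => simp [enc]
  | cons k l ih => simp only [enc, List.length_cons, pow_succ]; omega

/-- a list reindexes by `s` -/
def Reidx (m : ℕ) (l : List ℕ) (s : ℕ → ℕ) : Prop :=
  l.length = (m + 1) * (m + 1) ∧ ∀ i ≤ m, ∀ j ≤ m, l.getD (Nat.pair i j) 0 = Nat.pair (s i) (s j)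

theorem reidx_testBit {m : ℕ} {l : List ℕ} {s : ℕ → ℕ} (h : Reidx m l s) (X : ℕ) {i j : ℕ}
    (hi : i ≤ m) (hj : j ≤ m) :
    (enc l X).testBit (Nat.pair i j) = X.testBit (Nat.pair (s i) (s j)) := by
  have hlt : Nat.pair i j < l.length := by
    rw [h.1]; exact pair_lt (by omega) (by omega)
  rw [testBit_enc l X _ hlt, ← h.2 i hi j hj]
  simp [List.getD_eq_getElem?_getD, hlt]

theorem code_ext {m c d : ℕ} (hc : c < 2 ^ ((m + 1) * (m + 1))) (hd : d < 2 ^ ((m + 1) * (m + 1)))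
    (h : ∀ i ≤ m, ∀ j ≤ m, c.testBit (Nat.pair i j) = d.testBit (Nat.pair i j)) : c = d := by
  apply Nat.eq_of_testBit_eq
  intro k
  by_cases hk : k < (m + 1) * (m + 1)
  · have h1 := h (Nat.unpair k).1 ?_ (Nat.unpair k).2 ?_
    · rwa [Nat.pair_unpair] at h1
    all_goals
      by_contra hcon
      push Not at hcon
      have h3 : (Nat.unpair k).1 ≤ max (Nat.unpair k).1 (Nat.unpair k).2 := le_max_left _ _
      have h4 : (Nat.unpair k).2 ≤ max (Nat.unpair k).1 (Nat.unpair k).2 := le_max_right _ _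
      have h2 := Nat.max_sq_add_min_le_pair (Nat.unpair k).1 (Nat.unpair k).2
      rw [Nat.pair_unpair, pow_two] at h2
      have h5 : m + 1 ≤ max (Nat.unpair k).1 (Nat.unpair k).2 := by omega
      have h6 := Nat.mul_le_mul h5 h5
      omega
  · push Not at hk
    rw [Nat.testBit_lt_two_pow (lt_of_lt_of_le hc (Nat.pow_le_pow_right (by norm_num) hk)),
      Nat.testBit_lt_two_pow (lt_of_lt_of_le hd (Nat.pow_le_pow_right (by norm_num) hk))]

end PF

namespace PF

open FinDigraph

def L3 (x y z : ℕ) : List ℕ :=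
  [Nat.pair x x, Nat.pair x y, Nat.pair y x, Nat.pair y y, Nat.pair x z, Nat.pair y z,
    Nat.pair z x, Nat.pair z y, Nat.pair z z]

def L2 (x y : ℕ) : List ℕ := [Nat.pair x x, Nat.pair x y, Nat.pair y x, Nat.pair y y]

def s3 (x y z : ℕ) (i : ℕ) : ℕ := if i = 0 then x else if i = 1 then y else z

def s2 (x y : ℕ) (i : ℕ) : ℕ := if i = 0 then x else y

theorem reidx_L3 (x y z : ℕ) : Reidx 2 (L3 x y z) (s3 x y z) := by
  refine ⟨rfl, fun i hi j hj => ?_⟩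
  interval_cases i <;> interval_cases j <;> rfl

theorem reidx_L2 (x y : ℕ) : Reidx 1 (L2 x y) (s2 x y) := by
  refine ⟨rfl, fun i hi j hj => ?_⟩
  interval_cases i <;> interval_cases j <;> rfl

theorem reidx_le {m n : ℕ} {l : List ℕ} {s : ℕ → ℕ} (h : Reidx m l s) (X : ℕ)
    (hs : ∀ i ≤ m, s i ≤ n) (hinj : ∀ i ≤ m, ∀ j ≤ m, s i = s j → i = j) :
    P m (enc l X) ≤ P n X := by
  refine toD_le.2 ⟨⟨fun i => ⟨s i.1, Nat.lt_succ_of_le (hs i.1 (Nat.le_of_lt_succ i.2))⟩, ?_⟩, ?_⟩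
  · intro i j hij
    exact Fin.ext (hinj _ (Nat.le_of_lt_succ i.2) _ (Nat.le_of_lt_succ j.2) (Fin.mk.inj hij))
  · intro u v
    exact (reidx_testBit h X (Nat.le_of_lt_succ u.2) (Nat.le_of_lt_succ v.2)).symm

theorem L3_le {x y z n : ℕ} (X : ℕ) (hx : x ≤ n) (hy : y ≤ n) (hz : z ≤ n)
    (hxy : x ≠ y) (hxz : x ≠ z) (hyz : y ≠ z) : P 2 (enc (L3 x y z) X) ≤ P n X := by
  apply reidx_le (reidx_L3 x y z)
  · intro i hi; interval_cases i <;> simp [s3, *]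
  · intro i hi j hj
    interval_cases i <;> interval_cases j <;> simp [s3, *] <;> intro h <;> simp_all

theorem L2_le {x y n : ℕ} (X : ℕ) (hx : x ≤ n) (hy : y ≤ n)
    (hxy : x ≠ y) : P 1 (enc (L2 x y) X) ≤ P n X := by
  apply reidx_le (reidx_L2 x y)
  · intro i hi; interval_cases i <;> simp [s2, *]
  · intro i hi j hj
    interval_cases i <;> interval_cases j <;> simp [s2, *] <;> intro h <;> simp_all

theorem le_L3 {c X n : ℕ} (hc : c < 512) (h : P 2 c ≤ P n X) :
    ∃ x y z : Fin (n + 1), x ≠ y ∧ x ≠ z ∧ y ≠ z ∧ c = enc (L3 x y z) X := by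
  obtain ⟨f, hf⟩ := toD_le.1 h
  have h0 : ∀ a b : Fin 3, a ≠ b → f a ≠ f b := fun a b hab h => hab (f.injective h)
  refine ⟨f (0 : Fin 3), f (1 : Fin 3), f (2 : Fin 3), h0 _ _ (by decide), h0 _ _ (by decide),
    h0 _ _ (by decide), ?_⟩
  refine code_ext (m := 2) (by simpa using hc) (enc_lt (L3 _ _ _) X) fun i hi j hj => ?_
  rw [reidx_testBit (reidx_L3 _ _ _) X hi hj]
  have := hf (⟨i, by show i < 3; omega⟩ : Fin 3) (⟨j, by show j < 3; omega⟩ : Fin 3)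
  interval_cases i <;> interval_cases j <;> exact this.symm

theorem le_L2 {c X n : ℕ} (hc : c < 16) (h : P 1 c ≤ P n X) :
    ∃ x y : Fin (n + 1), x ≠ y ∧ c = enc (L2 x y) X := by
  obtain ⟨f, hf⟩ := toD_le.1 h
  have h0 : ∀ a b : Fin 2, a ≠ b → f a ≠ f b := fun a b hab h => hab (f.injective h)
  refine ⟨f (0 : Fin 2), f (1 : Fin 2), h0 _ _ (by decide), ?_⟩
  refine code_ext (m := 1) (by simpa using hc) (enc_lt (L2 _ _) X) fun i hi j hj => ?_
  rw [reidx_testBit (reidx_L2 _ _) X hi hj]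
  have := hf (⟨i, by show i < 2; omega⟩ : Fin 2) (⟨j, by show j < 2; omega⟩ : Fin 2)
  interval_cases i <;> interval_cases j <;> exact this.symm

theorem enc_map (p q : List ℕ) (X : ℕ) (h : ∀ k ∈ p, k < q.length) :
    enc (p.map (fun k => q.getD k 0)) X = enc p (enc q X) := by
  induction p with
  | nil => rfl
  | cons k p ih =>
    have hk : k < q.length := h k (by simp)
    have h1 := testBit_enc q X k hk
    simp only [List.map_cons, enc]
    rw [ih (fun k hk => h k (by simp [hk]))]
    congr 1
    rw [Nat.testBit_eq_decide_div_mod_eq, Nat.testBit_eq_decide_div_mod_eq, decide_eq_decide] at h1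
    rw [Nat.shiftRight_eq_div_pow, Nat.shiftRight_eq_div_pow]
    have h2 : q.getD k 0 = q[k] := by simp [List.getD_eq_getElem?_getD, hk]
    rw [h2]
    omega

theorem T3_facts {c : ℕ} (hc : c < 512) : (∀ p ∈ PL3, T3 (enc p c) = T3 c) ∧
    (∃ p ∈ PL3, enc p c = T3 c) ∧ M c = Ml c ∧ T3 (T3 c) = T3 c ∧ T3 c ∈ C3 ∧ M (T3 c) = M c := by
  have h := ballB_spec T3_check c hc
  simpa only [memC, Bool.and_eq_true, List.all_eq_true, List.any_eq_true, Nat.beq_eq, exists_eq_right',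
    exists_eq_right] using h

theorem T2_facts {c : ℕ} (hc : c < 16) : (∀ p ∈ PL2, T2 (enc p c) = T2 c) ∧
    (∃ p ∈ PL2, enc p c = T2 c) ∧ T2 (T2 c) = T2 c := by
  have h := ballB_spec T2_check c hc
  simpa only [Bool.and_eq_true, List.all_eq_true, List.any_eq_true, Nat.beq_eq] using h

theorem PL3_form : ∀ p ∈ PL3, ∃ x y z : Fin 3, x ≠ y ∧ x ≠ z ∧ y ≠ z ∧ p = L3 x y z := by
  decide +kernel

theorem PL2_form : ∀ p ∈ PL2, ∃ x y : Fin 2, x ≠ y ∧ p = L2 x y := by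
  decide +kernel

theorem L3_form : ∀ x y z : Fin 3, x ≠ y → x ≠ z → y ≠ z → L3 x y z ∈ PL3 := by
  decide +kernel

theorem L2_form : ∀ x y : Fin 2, x ≠ y → L2 x y ∈ PL2 := by
  decide +kernel

theorem P2_T3 {c : ℕ} (hc : c < 512) : P 2 (T3 c) = P 2 c := by
  obtain ⟨-, ⟨p, hp, h⟩, -⟩ := T3_facts hc
  obtain ⟨x, y, z, h1, h2, h3, hpe⟩ := PL3_form p hp
  rw [← h, hpe]
  refine eq_of_le (L3_le c (by omega) (by omega) (by omega) ?_ ?_ ?_)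
    (by rw [nVerts_P, nVerts_P])
  · exact fun h => h1 (Fin.ext h)
  · exact fun h => h2 (Fin.ext h)
  · exact fun h => h3 (Fin.ext h)

theorem P1_T2 {c : ℕ} (hc : c < 16) : P 1 (T2 c) = P 1 c := by
  obtain ⟨-, ⟨p, hp, h⟩, -⟩ := T2_facts hc
  obtain ⟨x, y, h1, rfl⟩ := PL2_form p hp
  rw [← h]
  refine eq_of_le (L2_le c (by omega) (by omega) ?_) le_rfl
  exact fun h => h1 (Fin.ext h)

theorem le_refl_D (x : D) : x ≤ x := by
  obtain ⟨G, rfl⟩ := exists_rep x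
  exact toD_le.2 (emb_of_iso (iso_refl G))

theorem P2_eq {c d : ℕ} (hc : c < 512) (hd : d < 512) : P 2 c = P 2 d ↔ T3 c = T3 d := by
  constructor
  · intro h
    have h0 : P 2 c ≤ P 2 d := by rw [h]; exact le_refl_D _
    obtain ⟨x, y, z, h1, h2, h3, hce⟩ := le_L3 hc h0
    rw [hce]
    exact (T3_facts hd).1 _ (L3_form x y z h1 h2 h3)
  · intro h
    rw [← P2_T3 hc, ← P2_T3 hd, h]

theorem P1_eq {c d : ℕ} (hc : c < 16) (hd : d < 16) : P 1 c = P 1 d ↔ T2 c = T2 d := by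
  constructor
  · intro h
    have h0 : P 1 c ≤ P 1 d := by rw [h]; exact le_refl_D _
    obtain ⟨x, y, h1, rfl⟩ := le_L2 hc h0
    exact (T2_facts hd).1 _ (L2_form x y h1)
  · intro h
    rw [← P1_T2 hc, ← P1_T2 hd, h]

def DL4 : List (List ℕ) := [L3 1 2 3, L3 0 2 3, L3 0 1 3, L3 0 1 2]

theorem dk_eq (X : ℕ) : dk X = DL4.map (fun q => T3 (enc q X)) := by
  have h : DL4 = [[3, 5, 7, 8, 10, 11, 13, 14, 15], [0, 4, 6, 8, 9, 11, 12, 14, 15],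
    [0, 1, 2, 3, 9, 10, 12, 13, 15], [0, 1, 2, 3, 4, 5, 6, 7, 8]] := by decide +kernel
  rw [h]; rfl

theorem DL4_form : ∀ x y z : Fin 4, x ≠ y → x ≠ z → y ≠ z →
    ∃ q ∈ DL4, ∃ p ∈ PL3, L3 x y z = p.map (fun k => q.getD k 0) := by
  decide +kernel

def DL3 : List (List ℕ) := [L2 1 2, L2 0 2, L2 0 1]

theorem DL3_form : ∀ x y : Fin 3, x ≠ y →
    ∃ q ∈ DL3, ∃ p ∈ PL2, L2 x y = p.map (fun k => q.getD k 0) := by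
  decide +kernel

theorem PL3_lt : ∀ p ∈ PL3, ∀ k ∈ p, k < 9 := by decide

theorem PL2_lt : ∀ p ∈ PL2, ∀ k ∈ p, k < 4 := by decide

theorem DL4_len : ∀ q ∈ DL4, q.length = 9 := by decide +kernel

theorem DL3_len : ∀ q ∈ DL3, q.length = 4 := by decide +kernel

theorem mem_dk_lt {X d : ℕ} (h : d ∈ dk X) : d < 512 ∧ T3 d = d := by
  rw [dk_eq, List.mem_map] at h
  obtain ⟨q, hq, rfl⟩ := h
  have : enc q X < 512 := by simpa [DL4_len q hq] using enc_lt q X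
  exact ⟨T3_lt _, (T3_facts this).2.2.2.1⟩

theorem le34 {c X : ℕ} (hc : c < 512) : P 2 c ≤ P 3 X ↔ T3 c ∈ dk X := by
  rw [dk_eq, List.mem_map]
  constructor
  · intro h
    obtain ⟨x, y, z, h1, h2, h3, hce⟩ := le_L3 hc h
    obtain ⟨q, hq, p, hp, hl⟩ := DL4_form x y z h1 h2 h3
    refine ⟨q, hq, ?_⟩
    have h4 : enc q X < 512 := by simpa [DL4_len q hq] using enc_lt q X
    rw [hce, hl, enc_map p q X (by rw [DL4_len q hq]; exact PL3_lt p hp)]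
    exact ((T3_facts h4).1 p hp).symm
  · rintro ⟨q, hq, h⟩
    have h4 : enc q X < 512 := by simpa [DL4_len q hq] using enc_lt q X
    rw [← (P2_eq h4 hc).2 h]
    simp only [DL4, List.mem_cons, List.not_mem_nil, or_false] at hq
    rcases hq with rfl | rfl | rfl | rfl <;> apply L3_le <;> norm_num

theorem le23' {d c : ℕ} (hd : d < 16) : P 1 d ≤ P 2 c ↔ ∃ q ∈ DL3, T2 (enc q c) = T2 d := by
  constructor
  · intro h
    obtain ⟨x, y, h1, rfl⟩ := le_L2 hd h
    obtain ⟨q, hq, p, hp, hl⟩ := DL3_form x y h1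
    refine ⟨q, hq, ?_⟩
    have h4 : enc q c < 16 := by simpa [DL3_len q hq] using enc_lt q c
    rw [hl, enc_map p q c (by rw [DL3_len q hq]; exact PL2_lt p hp)]
    exact ((T2_facts h4).1 p hp).symm
  · rintro ⟨q, hq, h⟩
    have h4 : enc q c < 16 := by simpa [DL3_len q hq] using enc_lt q c
    rw [← (P1_eq h4 hd).2 h]
    simp only [DL3, List.mem_cons, List.not_mem_nil, or_false] at hq
    rcases hq with rfl | rfl | rfl <;> apply L2_le <;> norm_num

theorem testBit_M {c k : ℕ} (hc : c < 512) :
    (M c).testBit k = true ↔ ∃ q ∈ DL3, T2 (enc q c) = k := by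
  rw [(T3_facts hc).2.2.1]
  have h : DL3 = [[3, 5, 7, 8], [0, 4, 6, 8], [0, 1, 2, 3]] := by decide +kernel
  rw [h]
  simp [Ml, Nat.testBit_or, Nat.testBit_two_pow]

theorem le23 {d c : ℕ} (hd : d < 16) (hc : c < 512) :
    P 1 d ≤ P 2 c ↔ (M c).testBit (T2 d) = true := by
  rw [le23' hd, testBit_M hc]

theorem M_bit {c k : ℕ} (hc : c < 512) (h : (M c).testBit k = true) : k < 16 ∧ T2 k = k := by
  obtain ⟨q, hq, rfl⟩ := (testBit_M hc).1 h
  have h4 : enc q c < 16 := by simpa [DL3_len q hq] using enc_lt q c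
  exact ⟨T2_lt _, (T2_facts h4).2.2⟩

/-- relabelling a 4-vertex graph so that a given 3-vertex subgraph comes first -/
theorem relabel {c X : ℕ} (hc : c < 512) (h : P 2 c ≤ P 3 X) :
    ∃ q < 128, P 3 X = P 3 (c + 512 * q) := by
  obtain ⟨f, hf⟩ := toD_le.1 h
  change Fin 3 ↪ Fin 4 at f
  obtain ⟨w, hw⟩ : ∃ w : Fin 4, ∀ i, f i ≠ w := by
    by_contra hcon
    push Not at hcon
    have : Function.Surjective f := hcon
    have := Fintype.card_le_of_surjective f this
    simp at this
  let s : Fin 4 → Fin 4 := Fin.snoc (α := fun _ => Fin 4) f w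
  have hs1 : ∀ i : Fin 3, s i.castSucc = f i := fun i => Fin.snoc_castSucc (α := fun _ => Fin 4) _ _ _
  have hs2 : s (Fin.last 3) = w := Fin.snoc_last (α := fun _ => Fin 4) _ _
  have hinj : Function.Injective s := by
    intro i j
    refine Fin.lastCases ?_ (fun i => ?_) i <;> refine Fin.lastCases ?_ (fun j => ?_) j
    · intro; rfl
    · intro h; rw [hs1, hs2] at h; exact absurd h.symm (hw j)
    · intro h; rw [hs1, hs2] at h; exact absurd h (hw i)
    · intro h; rw [hs1, hs1] at h; rw [f.injective h]
  obtain ⟨d, hd, hd'⟩ := exists_code 3 (fun i j => (mk 3 X).adj (s i) (s j))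
  have hmod : d % 512 = c := by
    refine code_ext (m := 2) (by have := Nat.mod_lt d (show 0 < 512 by norm_num); simpa using this)
      (by simpa using hc) fun i hi j hj => ?_
    have hlt : Nat.pair i j < 9 := pair_lt (n := 3) (by omega) (by omega)
    have h5 : d % 512 = d % 2 ^ 9 := by norm_num
    rw [h5, Nat.testBit_mod_two_pow]
    simp only [hlt, decide_true, Bool.true_and]
    have h1 := hd' (Fin.castSucc ⟨i, by omega⟩) (Fin.castSucc ⟨j, by omega⟩)
    have h2 := hf (⟨i, by show i < 3; omega⟩ : Fin 3) (⟨j, by show j < 3; omega⟩ : Fin 3)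
    simp only [hs1] at h1
    exact h1.trans h2
  refine ⟨d / 512, by norm_num at hd; omega, ?_⟩
  have h6 : c + 512 * (d / 512) = d := by omega
  rw [h6]
  have h7 : Emb (mk 3 d) (mk 3 X) :=
    ⟨(⟨s, hinj⟩ : Fin 4 ↪ Fin 4), fun u v => (hd' u v).symm⟩
  exact (toD_eq.2 (iso_of_emb h7 le_rfl)).symm

end PF

namespace PF

open FinDigraph

theorem exists_below {k : ℕ} {x : D} (h : nVerts x = k + 2) : ∃ y, y ≤ x ∧ nVerts y = k + 1 := by
  obtain ⟨c, -, rfl⟩ := exists_P h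
  refine ⟨P k c, toD_le.2 ⟨(Fin.castSuccEmb : Fin (k + 1) ↪ Fin (k + 2)), fun u v => rfl⟩, rfl⟩

structure Good (F : D → D) : Prop where
  lv : ∀ x ∈ Dn 4, nVerts (F x) = nVerts x
  le : ∀ x ∈ Dn 4, ∀ y ∈ Dn 4, (x ≤ y ↔ F x ≤ F y)
  inj : ∀ x ∈ Dn 4, ∀ y ∈ Dn 4, F x = F y → x = y
  surj : ∀ y ∈ Dn 4, ∃ x ∈ Dn 4, F x = y

theorem lv_mono {m : ℕ} (e : ↥(Dn m) ≃o ↥(Dn m)) (k : ℕ) :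
    ∀ x : ↥(Dn m), nVerts x.1 = k + 1 → k + 1 ≤ nVerts (e x).1 := by
  induction k with
  | zero => intro x _; exact nVerts_pos _
  | succ k ih =>
    intro x hx
    obtain ⟨y, hy, hk⟩ := exists_below hx
    have hxm : nVerts x.1 ≤ m := x.2
    have hym : y ∈ Dn m := by show nVerts y ≤ m; omega
    have h1 := ih ⟨y, hym⟩ hk
    have h2 : (e ⟨y, hym⟩).1 ≤ (e x).1 := (e.le_iff_le (x := ⟨y, hym⟩) (y := x)).2 hy
    have h3 := nVerts_mono h2
    by_contra hcon
    have h4 := eq_of_le h2 (by omega)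
    have h5 := e.injective (Subtype.ext h4)
    have h6 : y = x.1 := congrArg Subtype.val h5
    rw [h6] at hk
    omega

theorem lv_eq {m : ℕ} (e : ↥(Dn m) ≃o ↥(Dn m)) (x : ↥(Dn m)) : nVerts (e x).1 = nVerts x.1 := by
  have h := nVerts_pos x.1
  have h' := nVerts_pos (e x).1
  have h1 := lv_mono e (nVerts x.1 - 1) x (by omega)
  have h2 := lv_mono e.symm (nVerts (e x).1 - 1) (e x) (by omega)
  rw [e.symm_apply_apply] at h2
  omega

open Classical in
theorem exists_good {g : ↥(Dn 3) ≃o ↥(Dn 3)} (hg : g ∈ Aut3D4Iso) :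
    ∃ F : D → D, Good F ∧ ∀ x : ↥(Dn 3), (g x).1 = F x.1 := by
  obtain ⟨ψ, ⟨hb, hle⟩, hψ⟩ := hg
  let e : ↥(Dn 4) ≃o ↥(Dn 4) := ⟨Equiv.ofBijective ψ hb, fun {x y} => (hle x y).symm⟩
  have he : ∀ x, e x = ψ x := fun _ => rfl
  let F : D → D := fun x => if h : x ∈ Dn 4 then (e ⟨x, h⟩).1 else x
  have hF : ∀ x (h : x ∈ Dn 4), F x = (e ⟨x, h⟩).1 := fun x h => dif_pos h
  refine ⟨F, ⟨?_, ?_, ?_, ?_⟩, ?_⟩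
  · intro x hx
    rw [hF x hx, lv_eq]
  · intro x hx y hy
    rw [hF x hx, hF y hy]
    exact hle ⟨x, hx⟩ ⟨y, hy⟩
  · intro x hx y hy h
    rw [hF x hx, hF y hy] at h
    exact congrArg Subtype.val (e.injective (Subtype.ext h))
  · intro y hy
    refine ⟨(e.symm ⟨y, hy⟩).1, (e.symm ⟨y, hy⟩).2, ?_⟩
    rw [hF _ (e.symm ⟨y, hy⟩).2]
    simp
  · intro x
    rw [hF _ (mem_Dn_succ x.2), he, hψ]

theorem P_mem {n m : ℕ} (c : ℕ) (h : n < m) : P n c ∈ Dn m := h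

theorem mem_of_memC {c : ℕ} {l : List ℕ} : memC c l = true ↔ c ∈ l := by
  simp [memC, Nat.beq_eq]

theorem exists_canon {F : D → D} (hF : Good F) (c : ℕ) :
    ∃ d, d < 512 ∧ T3 d = d ∧ F (P 2 c) = P 2 d := by
  have h : nVerts (F (P 2 c)) = 2 + 1 := hF.lv _ (P_mem c (by norm_num))
  obtain ⟨d, hd, h'⟩ := exists_P h
  have hd' : d < 512 := by simpa using hd
  exact ⟨T3 d, T3_lt d, (T3_facts hd').2.2.2.1, by rw [h', P2_T3 hd']⟩

theorem M_pres {F : D → D} (hF : Good F) (h1 : ∀ d < 16, F (P 1 d) = P 1 d) {c d : ℕ}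
    (hc : c < 512) (hd : d < 512) (h : F (P 2 c) = P 2 d) : M d = M c := by
  apply Nat.eq_of_testBit_eq
  intro k
  have key : ∀ k < 16, T2 k = k → ((M d).testBit k = true ↔ (M c).testBit k = true) := by
    intro k hk hk'
    have e1 := le23 hk hd
    have e2 := le23 hk hc
    rw [hk'] at e1 e2
    rw [← e1, ← e2, ← h, hF.le (P 1 k) (P_mem k (by norm_num)) (P 2 c) (P_mem c (by norm_num)),
      h1 k hk]
  rw [Bool.eq_iff_iff]
  constructor
  · intro hk
    exact (key k (M_bit hd hk).1 (M_bit hd hk).2).1 hk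
  · intro hk
    exact (key k (M_bit hc hk).1 (M_bit hc hk).2).2 hk

theorem core {F : D → D} (hF : Good F) (h1 : ∀ d < 16, F (P 1 d) = P 1 d)
    (ha : F (P 2 22) = P 2 22) (hb : F (P 2 287) = P 2 287) : ∀ c < 512, F (P 2 c) = P 2 c := by
  choose f hf1 hf2 hf3 using exists_canon hF
  have huniq : ∀ {c d : ℕ}, c < 512 → d < 512 → T3 c = c → T3 d = d → P 2 c = P 2 d → c = d := by
    intro c d hc hd hc' hd' h
    rw [← hc', ← hd']
    exact (P2_eq hc hd).1 h
  have hM : ∀ c < 512, M (f c) = M c := fun c hc => M_pres hF h1 hc (hf1 c) (hf3 c)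
  have hC3 : ∀ c ∈ C3, c < 512 ∧ T3 c = c := by
    intro c hc
    have h := C3_check
    rw [List.all_eq_true] at h
    have h := h c hc
    simp only [Bool.and_eq_true, Nat.beq_eq, Nat.ble_eq] at h
    exact ⟨by omega, h.1⟩
  have hfC3 : ∀ c, f c ∈ C3 := by
    intro c
    have := (T3_facts (hf1 c)).2.2.2.2.1
    rwa [hf2 c] at this
  have hcompat : ∀ R : List ℕ, (∀ c ∈ R, f c = c) → ∀ c < 512, compat R c (f c) = true := by
    intro R hR c hc
    unfold compat
    cases h : memC c R with
    | true => simp [hR c (mem_of_memC.1 h), Nat.beq_eq]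
    | false => simp [hM c hc, Nat.beq_eq]
  have hdeck1 : ∀ X Y, F (P 3 X) = P 3 Y → ∀ d ∈ dk X, f d ∈ dk Y := by
    intro X Y h d hd
    obtain ⟨hd1, hd2⟩ := mem_dk_lt hd
    have h2 : P 2 d ≤ P 3 X := (le34 hd1).2 (by rwa [hd2])
    rw [hF.le _ (P_mem d (by norm_num)) _ (P_mem X (by norm_num)), h, hf3 d] at h2
    have h3 := (le34 (hf1 d)).1 h2
    rwa [hf2] at h3
  have hdeck2 : ∀ X Y, F (P 3 X) = P 3 Y → ∀ d' ∈ dk Y, ∃ d ∈ dk X, f d = d' := by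
    intro X Y h d' hd
    obtain ⟨hd1, hd2⟩ := mem_dk_lt hd
    have h2 : P 2 d' ≤ P 3 Y := (le34 hd1).2 (by rwa [hd2])
    obtain ⟨x, hx, hx'⟩ := hF.surj (P 2 d') (P_mem d' (by norm_num))
    have hlv := hF.lv x hx
    rw [hx', nVerts_P] at hlv
    obtain ⟨c, hc, rfl⟩ := exists_P hlv.symm
    have hc : c < 512 := by simpa using hc
    rw [← h, ← hx', ← hF.le _ hx _ (P_mem X (by norm_num))] at h2
    refine ⟨T3 c, (le34 hc).1 h2, ?_⟩
    apply huniq (hf1 _) hd1 (hf2 _) hd2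
    rw [← hf3, P2_T3 hc, hx']
  have hstep : ∀ R t r, stepB R t r = true → (∀ c ∈ R, f c = c) → f t = t := by
    intro R t r hs hR
    simp only [stepB, Bool.and_eq_true, List.all_eq_true, mem_of_memC] at hs
    obtain ⟨hs1, hs2⟩ := hs
    by_contra hne
    obtain ⟨ht1, ht2⟩ := mem_dk_lt hs1
    have h3 := hs2 (f t) (hfC3 t)
    have e1 : Nat.beq (f t) t = false := by
      rw [← Bool.not_eq_true, Nat.beq_eq]; exact hne
    have e2 : Nat.beq (M (f t)) (M t) = true := by rw [Nat.beq_eq]; exact hM t ht1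
    rw [e1, e2] at h3
    simp only [Bool.not_true, Bool.false_or] at h3
    have hlv : nVerts (F (P 3 (t + 512 * r))) = 3 + 1 := hF.lv _ (P_mem _ (by norm_num))
    obtain ⟨X', -, hX'⟩ := exists_P hlv
    have h4 : P 2 (f t) ≤ P 3 X' := by
      rw [← hX', ← hf3, ← hF.le _ (P_mem t (by norm_num)) _ (P_mem _ (by norm_num))]
      exact (le34 ht1).2 (by rwa [ht2])
    obtain ⟨q, hq, hq'⟩ := relabel (hf1 t) h4
    rw [hq'] at hX'
    have h5 := ballB_spec h3 q hq
    rw [force_eq, force_eq] at h5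
    have h6 : okB R (dk (t + 512 * r)) (dk (f t + 512 * q)) = true := by
      unfold okB
      rw [Bool.and_eq_true, List.all_eq_true, List.all_eq_true]
      constructor
      · intro x hx
        rw [force_eq, List.any_eq_true]
        obtain ⟨d, hd, hd'⟩ := hdeck2 _ _ hX' x hx
        exact ⟨d, hd, by rw [← hd']; exact hcompat R hR d (mem_dk_lt hd).1⟩
      · intro d hd
        rw [List.any_eq_true]
        exact ⟨f d, hdeck1 _ _ hX' d hd, hcompat R hR d (mem_dk_lt hd).1⟩
    rw [h6] at h5
    exact Bool.noConfusion h5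
  have hrun : ∀ s R, runB s R = true → (∀ c ∈ R, f c = c) → ∀ c ∈ C3, f c = c := by
    intro s
    induction s with
    | nil =>
      intro R h hR c hc
      simp only [runB, List.all_eq_true] at h
      have h2 := h c hc (f c) (hfC3 c)
      rw [hcompat R hR c (hC3 c hc).1] at h2
      have h3 : Nat.beq (f c) c = true := by
        cases h4 : Nat.beq (f c) c with
        | true => rfl
        | false => rw [h4] at h2; exact Bool.noConfusion h2
      exact Nat.eq_of_beq_eq_true h3
    | cons p s ih =>
      intro R h hR
      simp only [runB, Bool.and_eq_true] at h
      refine ih (p.1 :: R) h.2 ?_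
      intro c hc
      rcases List.mem_cons.1 hc with h2 | h2
      · rw [h2]; exact hstep R p.1 p.2 h.1 hR
      · exact hR c h2
  have hfix : ∀ c ∈ C3, F (P 2 c) = P 2 c → f c = c := by
    intro c hc h
    exact huniq (hf1 c) (hC3 c hc).1 (hf2 c) (hC3 c hc).2 (by rw [← hf3, h])
  have hall := hrun stepsL [22, 287] run_check (by
    intro c hc
    simp only [List.mem_cons, List.not_mem_nil, or_false] at hc
    rcases hc with rfl | rfl
    · exact hfix _ (by decide) ha
    · exact hfix _ (by decide) hb)
  intro c hc
  have h2 := hall (T3 c) (T3_facts hc).2.2.2.2.1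
  rw [← P2_T3 hc, hf3, h2]

end PF

namespace PF

open FinDigraph

theorem P0_le {c X : ℕ} (hc : c < 2) : P 0 c ≤ P 1 X ↔ (X % 2 = c ∨ X / 8 % 2 = c) := by
  have key : ∀ a : ℕ, (X.testBit a = c.testBit 0 ↔ X / 2 ^ a % 2 = c) := by
    intro a
    rw [Nat.testBit_eq_decide_div_mod_eq, Nat.testBit_eq_decide_div_mod_eq, decide_eq_decide]
    simp only [pow_zero, Nat.div_one]
    omega
  have k0 := key 0
  have k3 := key 3
  simp only [pow_zero, Nat.div_one] at k0
  norm_num only at k3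
  rw [← k0, ← k3]
  constructor
  · intro h
    obtain ⟨f, hf⟩ := toD_le.1 h
    have h1 := hf (0 : Fin 1) (0 : Fin 1)
    change Fin 1 ↪ Fin 2 at f
    have : f 0 = 0 ∨ f 0 = 1 := by omega
    rcases this with h2 | h2
    · left
      exact (congrArg (fun z : Fin 2 => X.testBit (Nat.pair z z)) h2).symm.trans h1
    · right
      exact (congrArg (fun z : Fin 2 => X.testBit (Nat.pair z z)) h2).symm.trans h1
  · have emb : ∀ z : Fin 2, X.testBit (Nat.pair z z) = c.testBit 0 → P 0 c ≤ P 1 X := by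
      intro z hz
      refine toD_le.2 ⟨(⟨fun _ => z, fun i j _ => Subsingleton.elim i j⟩ : Fin 1 ↪ Fin 2), ?_⟩
      intro u v
      have hu : u = (0 : Fin 1) := Subsingleton.elim (α := Fin 1) u 0
      have hv : v = (0 : Fin 1) := Subsingleton.elim (α := Fin 1) v 0
      rw [hu, hv]
      exact hz
    rintro (h | h)
    · exact emb 0 h
    · exact emb 1 h

theorem P0_inj : P 0 0 ≠ P 0 1 := by
  intro h
  have h1 : P 0 0 ≤ P 1 0 := (P0_le (by norm_num)).2 (by norm_num)
  rw [h] at h1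
  have := (P0_le (by norm_num)).1 h1
  norm_num at this

theorem T2_canon : ∀ d < 16, T2 d ∈ [0, 1, 2, 3, 5, 6, 7, 9, 11, 15] := by decide +kernel

theorem T2_id : ∀ d ∈ [0, 1, 2, 3, 5, 6, 7, 9, 11, 15], T2 d = d ∧ d < 16 := by decide +kernel

theorem P1_ne {c d : ℕ} (hc : c ∈ [0, 1, 2, 3, 5, 6, 7, 9, 11, 15])
    (hd : d ∈ [0, 1, 2, 3, 5, 6, 7, 9, 11, 15]) : P 1 c = P 1 d ↔ c = d := by
  rw [P1_eq (T2_id c hc).2 (T2_id d hd).2, (T2_id c hc).1, (T2_id d hd).1]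

theorem exists_canon1 {F : D → D} (hF : Good F) (c : ℕ) :
    ∃ d ∈ [0, 1, 2, 3, 5, 6, 7, 9, 11, 15], F (P 1 c) = P 1 d := by
  have h : nVerts (F (P 1 c)) = 1 + 1 := hF.lv _ (P_mem c (by norm_num))
  obtain ⟨d, hd, h'⟩ := exists_P h
  have hd' : d < 16 := by simpa using hd
  exact ⟨T2 d, T2_canon d hd', by rw [h', P1_T2 hd']⟩

theorem exists_P0 {F : D → D} (hF : Good F) (c : ℕ) : F (P 0 c) = P 0 0 ∨ F (P 0 c) = P 0 1 := by
  have h : nVerts (F (P 0 c)) = 0 + 1 := hF.lv _ (P_mem c (by norm_num))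
  obtain ⟨d, hd, h'⟩ := exists_P h
  have hd' : d < 2 := by simpa using hd
  rw [h']
  interval_cases d
  · exact Or.inl rfl
  · exact Or.inr rfl

theorem P0_one {F : D → D} (hF : Good F) (h : F (P 0 0) = P 0 0) : F (P 0 1) = P 0 1 := by
  rcases exists_P0 hF 1 with h1 | h1
  · exact absurd (hF.inj _ (P_mem _ (by norm_num)) _ (P_mem _ (by norm_num)) (h.trans h1.symm)) P0_inj
  · exact h1

theorem loop_pres {F : D → D} (hF : Good F) (h : F (P 0 0) = P 0 0) {d e : ℕ}
    (he : F (P 1 d) = P 1 e) {c : ℕ} (hc : c < 2) :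
    (d % 2 = c ∨ d / 8 % 2 = c) ↔ (e % 2 = c ∨ e / 8 % 2 = c) := by
  rw [← P0_le hc, ← P0_le hc, hF.le _ (P_mem _ (by norm_num)) _ (P_mem _ (by norm_num)), he]
  interval_cases c
  · rw [h]
  · rw [P0_one hF h]

theorem M_tourn {F : D → D} (hF : Good F) {s e c d : ℕ}
    (hs : s ∈ [0, 1, 2, 3, 5, 6, 7, 9, 11, 15]) (he : e ∈ [0, 1, 2, 3, 5, 6, 7, 9, 11, 15])
    (h : F (P 1 s) = P 1 e) (hc : c < 512) (hd : d < 512) (hM : M c = 2 ^ s)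
    (hcd : F (P 2 c) = P 2 d) : M d = 2 ^ e := by
  have h4 : ∀ n, P 1 n ∈ Dn 4 := fun n => P_mem n (by norm_num)
  have h5 : ∀ n, P 2 n ∈ Dn 4 := fun n => P_mem n (by norm_num)
  apply Nat.eq_of_testBit_eq
  intro k
  rw [Bool.eq_iff_iff, Nat.testBit_two_pow, decide_eq_true_iff]
  constructor
  · intro hk
    obtain ⟨hk1, hk2⟩ := M_bit hd hk
    have h1 : P 1 k ≤ P 2 d := (le23 hk1 hd).2 (by rwa [hk2])
    obtain ⟨x, hx, hx'⟩ := hF.surj (P 1 k) (h4 k)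
    have hlv := hF.lv x hx
    rw [hx', nVerts_P] at hlv
    obtain ⟨j, hj, rfl⟩ := exists_P hlv.symm
    have hj : j < 16 := by simpa using hj
    rw [← hcd, ← hx', ← hF.le _ hx _ (h5 c), le23 hj hc, hM, Nat.testBit_two_pow,
      decide_eq_true_iff] at h1
    rw [← P1_T2 hj, ← h1, h] at hx'
    have h6 := (P1_eq (T2_id e he).2 hk1).1 hx'
    rw [(T2_id e he).1, hk2] at h6
    exact h6
  · rintro rfl
    have h1 : P 1 s ≤ P 2 c := by
      rw [le23 (T2_id s hs).2 hc, hM, (T2_id s hs).1, Nat.testBit_two_pow_self]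
    rw [hF.le _ (h4 s) _ (h5 c), h, hcd, le23 (T2_id e he).2 hd, (T2_id e he).1] at h1
    exact h1

theorem tourn_data : M 98 = 2 ^ 2 ∧ M 50 = 2 ^ 2 ∧ M 363 = 2 ^ 11 ∧ M 315 = 2 ^ 11 ∧
    T3 98 = 98 ∧ T3 50 = 50 ∧ T3 363 = 363 ∧ T3 315 = 315 := by decide +kernel

theorem tourn' {F : D → D} (hF : Good F) {s e c c' : ℕ}
    (hs : s ∈ [0, 1, 2, 3, 5, 6, 7, 9, 11, 15]) (he : e ∈ [0, 6, 9, 15])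
    (h : F (P 1 s) = P 1 e) (hc : c < 512) (hM : M c = 2 ^ s)
    (hc' : c' < 512) (hM' : M c' = 2 ^ s) (hne : T3 c ≠ T3 c') : False := by
  have he' : e ∈ [0, 1, 2, 3, 5, 6, 7, 9, 11, 15] := by
    simp only [List.mem_cons, List.not_mem_nil, or_false] at he ⊢
    omega
  obtain ⟨d, hd1, hd2, hd3⟩ := exists_canon hF c
  obtain ⟨d', hd1', hd2', hd3'⟩ := exists_canon hF c'
  have m1 := M_tourn hF hs he' h hc hd1 hM hd3
  have m2 := M_tourn hF hs he' h hc' hd1' hM' hd3'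
  have h1 := tourn_check
  rw [List.all_eq_true] at h1
  have h2 := ballB_spec (h1 e he) d hd1
  have e1 : Nat.beq (M d) (2 ^ e) = true := by rw [Nat.beq_eq]; exact m1
  have e2 : Nat.beq (M d') (2 ^ e) = true := by rw [Nat.beq_eq]; exact m2
  rw [e1] at h2
  simp only [Bool.not_true, Bool.false_or, List.all_eq_true] at h2
  have hC : d' ∈ C3 := by
    have := (T3_facts hd1').2.2.2.2.1
    rwa [hd2'] at this
  have h3 := h2 d' hC
  rw [e2, Bool.not_true, Bool.false_or, Nat.beq_eq, hd2] at h3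
  rw [h3, ← hd3] at hd3'
  have h4 := hF.inj _ (P_mem _ (by norm_num)) _ (P_mem _ (by norm_num)) hd3'
  exact hne ((P2_eq hc hc').1 h4.symm)

theorem tourn {F : D → D} (hF : Good F) {s e : ℕ} (hs : s = 2 ∨ s = 11) (he : e ∈ [0, 6, 9, 15]) :
    F (P 1 s) ≠ P 1 e := by
  intro h
  obtain ⟨h1, h2, h3, h4, h5, h6, h7, h8⟩ := tourn_data
  rcases hs with rfl | rfl
  · exact tourn' hF (by decide) he h (by norm_num) h1 (by norm_num) h2 (by rw [h5, h6]; norm_num)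
  · exact tourn' hF (by decide) he h (by norm_num) h3 (by norm_num) h4 (by rw [h7, h8]; norm_num)

/-- image of a 2-vertex graph, loop structure preserved -/
theorem lev2 {F : D → D} (hF : Good F) (h : F (P 0 0) = P 0 0) (d : ℕ) :
    ∃ e ∈ [0, 1, 2, 3, 5, 6, 7, 9, 11, 15], F (P 1 d) = P 1 e ∧
      ∀ c < 2, (d % 2 = c ∨ d / 8 % 2 = c) ↔ (e % 2 = c ∨ e / 8 % 2 = c) := by
  obtain ⟨e, he, h1⟩ := exists_canon1 hF d
  exact ⟨e, he, h1, fun c hc => loop_pres hF h h1 hc⟩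

theorem lev2_mixed {F : D → D} (hF : Good F) (h : F (P 0 0) = P 0 0) {d : ℕ}
    (hd : d ∈ [1, 3, 5, 7]) : ∃ e ∈ [1, 3, 5, 7], F (P 1 d) = P 1 e := by
  obtain ⟨e, he, h1, h2⟩ := lev2 hF h d
  refine ⟨e, ?_, h1⟩
  have a0 := h2 0 (by norm_num)
  have a1 := h2 1 (by norm_num)
  simp only [List.mem_cons, List.not_mem_nil, or_false] at he hd ⊢
  omega

theorem lev2_S {F : D → D} (hF : Good F) (h : F (P 0 0) = P 0 0) : F (P 1 2) = P 1 2 := by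
  obtain ⟨e, he, h1, h2⟩ := lev2 hF h 2
  have a1 := h2 1 (by norm_num)
  have a2 : e ∉ [0, 6, 9, 15] := fun hm => tourn hF (Or.inl rfl) hm h1
  have : e = 2 := by
    simp only [List.mem_cons, List.not_mem_nil, or_false] at he a2
    omega
  rw [h1, this]

theorem lev2_S' {F : D → D} (hF : Good F) (h : F (P 0 0) = P 0 0) : F (P 1 11) = P 1 11 := by
  obtain ⟨e, he, h1, h2⟩ := lev2 hF h 11
  have a0 := h2 0 (by norm_num)
  have a2 : e ∉ [0, 6, 9, 15] := fun hm => tourn hF (Or.inr rfl) hm h1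
  have : e = 11 := by
    simp only [List.mem_cons, List.not_mem_nil, or_false] at he a2
    omega
  rw [h1, this]

theorem P1_inj {F : D → D} (hF : Good F) {c d e : ℕ} (hc : F (P 1 c) = P 1 e)
    (hd : F (P 1 d) = P 1 e) (h1 : c ∈ [0, 1, 2, 3, 5, 6, 7, 9, 11, 15])
    (h2 : d ∈ [0, 1, 2, 3, 5, 6, 7, 9, 11, 15]) : c = d :=
  (P1_ne h1 h2).1 (hF.inj _ (P_mem _ (by norm_num)) _ (P_mem _ (by norm_num)) (hc.trans hd.symm))

theorem lev2_N {F : D → D} (hF : Good F) (h : F (P 0 0) = P 0 0) {d : ℕ} (hd : d = 0 ∨ d = 6) :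
    F (P 1 d) = P 1 0 ∨ F (P 1 d) = P 1 6 := by
  obtain ⟨e, he, h1, h2⟩ := lev2 hF h d
  have a1 := h2 1 (by norm_num)
  have hdm : d ∈ [0, 1, 2, 3, 5, 6, 7, 9, 11, 15] := by rcases hd with rfl | rfl <;> decide
  have a2 : e ≠ 2 := by
    rintro rfl
    have := P1_inj hF h1 (lev2_S hF h) hdm (by decide)
    omega
  have : e = 0 ∨ e = 6 := by
    simp only [List.mem_cons, List.not_mem_nil, or_false] at he
    omega
  rw [h1]
  rcases this with rfl | rfl
  · exact Or.inl rfl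
  · exact Or.inr rfl

theorem lev2_N' {F : D → D} (hF : Good F) (h : F (P 0 0) = P 0 0) {d : ℕ} (hd : d = 9 ∨ d = 15) :
    F (P 1 d) = P 1 9 ∨ F (P 1 d) = P 1 15 := by
  obtain ⟨e, he, h1, h2⟩ := lev2 hF h d
  have a1 := h2 0 (by norm_num)
  have hdm : d ∈ [0, 1, 2, 3, 5, 6, 7, 9, 11, 15] := by rcases hd with rfl | rfl <;> decide
  have a2 : e ≠ 11 := by
    rintro rfl
    have := P1_inj hF h1 (lev2_S' hF h) hdm (by decide)
    omega
  have : e = 9 ∨ e = 15 := by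
    simp only [List.mem_cons, List.not_mem_nil, or_false] at he
    omega
  rw [h1]
  rcases this with rfl | rfl
  · exact Or.inl rfl
  · exact Or.inr rfl

theorem fixD2 {F : D → D} (hF : Good F) (h : F (P 0 0) = P 0 0) (h0 : F (P 1 0) = P 1 0)
    (h9 : F (P 1 9) = P 1 9) (hm : ∀ d ∈ [1, 3, 5, 7], F (P 1 d) = P 1 d) :
    ∀ d < 16, F (P 1 d) = P 1 d := by
  have h6 : F (P 1 6) = P 1 6 := by
    rcases lev2_N hF h (Or.inr rfl) with h1 | h1
    · have := P1_inj hF h1 h0 (by decide) (by decide)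
      omega
    · exact h1
  have h15 : F (P 1 15) = P 1 15 := by
    rcases lev2_N' hF h (Or.inr rfl) with h1 | h1
    · have := P1_inj hF h1 h9 (by decide) (by decide)
      omega
    · exact h1
  intro d hd
  rw [← P1_T2 hd]
  have h2 := T2_canon d hd
  have h3 := hm 1 (by decide)
  have h4 := hm 3 (by decide)
  have h5 := hm 5 (by decide)
  have h7 := hm 7 (by decide)
  have hS := lev2_S hF h
  have hS' := lev2_S' hF h
  simp only [List.mem_cons, List.not_mem_nil, or_false] at h2
  rcases h2 with h2 | h2 | h2 | h2 | h2 | h2 | h2 | h2 | h2 | h2 <;> rw [h2] <;> assumption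

/-- A restriction fixing the small graphs and two 3-vertex graphs is trivial. -/
theorem core_g {g : ↥(Dn 3) ≃o ↥(Dn 3)} (hg : g ∈ Aut3D4Iso)
    (h2 : ∀ x : ↥(Dn 3), nVerts x.1 ≤ 2 → g x = x)
    (ha : (g ⟨P 2 22, P_mem _ (by norm_num)⟩).1 = P 2 22)
    (hb : (g ⟨P 2 287, P_mem _ (by norm_num)⟩).1 = P 2 287) : g = 1 := by
  obtain ⟨F, hF, hgF⟩ := exists_good hg
  rw [hgF] at ha hb
  have h1 : ∀ d < 16, F (P 1 d) = P 1 d := by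
    intro d _
    have := h2 ⟨P 1 d, P_mem _ (by norm_num)⟩ (by rw [nVerts_P])
    rw [← hgF ⟨P 1 d, P_mem _ (by norm_num)⟩, this]
  have hall := core hF h1 ha hb
  ext x
  show (g x).1 = x.1
  rcases Nat.lt_or_ge 2 (nVerts x.1) with h | h
  · have hx : nVerts x.1 ≤ 3 := x.2
    obtain ⟨c, hc, hxc⟩ := exists_P (n := 2) (show nVerts x.1 = 2 + 1 by omega)
    rw [hgF, hxc]
    exact hall c (by simpa using hc)
  · rw [h2 x h]

end PF

namespace PF

open FinDigraph

/-! ### the action -/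

abbrev NN := Multiplicative (ZMod 2 × ZMod 2 × ZMod 2 × ZMod 2) × Equiv.Perm (Bool × Bool)

def tp (p r : ZMod 2) (t : Bool × Bool) : Bool × Bool :=
  if t.1 = t.2 then (xor t.1 (decide (p = 1)), xor t.2 (decide (p = 1)))
  else if r = 1 then t.swap else t

theorem tp_zero : ∀ t, tp 0 0 t = t := by decide

theorem tp_add : ∀ p r p' r' t, tp (p + p') (r + r') t = tp p r (tp p' r' t) := by decide

theorem tp_swap : ∀ p r t, tp p r (Prod.swap t) = (tp p r t).swap := by decide

def E (n : NN) (a b : Bool) (t : Bool × Bool) : Bool × Bool :=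
  match a, b with
  | false, false => tp n.1.toAdd.1 n.1.toAdd.2.2.1 t
  | true, true => tp n.1.toAdd.2.1 n.1.toAdd.2.2.2 t
  | true, false => n.2 t
  | false, true => (n.2 t.swap).swap

theorem E_one (a b : Bool) (t : Bool × Bool) : E 1 a b t = t := by
  cases a <;> cases b <;> simp [E, tp_zero]

theorem E_mul (n n' : NN) (a b : Bool) (t : Bool × Bool) :
    E (n * n') a b t = E n a b (E n' a b t) := by
  cases a <;> cases b <;> simp [E, tp_add]

theorem E_swap (n : NN) (a b : Bool) (t : Bool × Bool) : E n b a t.swap = (E n a b t).swap := by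
  cases a <;> cases b <;> simp [E, tp_swap]

theorem gext {n : ℕ} {h h' : 0 < n} {a b : Fin n → Fin n → Bool} (e : ∀ u v, a u v = b u v) :
    (⟨n, h, a⟩ : FinDigraph) = ⟨n, h', b⟩ := by
  have : a = b := funext fun u => funext fun v => e u v
  rw [this]

def actN (n : NN) (G : FinDigraph) : FinDigraph :=
  ⟨G.n, G.pos, fun u v => if u = v then G.adj u v
    else (E n (G.adj u u) (G.adj v v) (G.adj u v, G.adj v u)).1⟩

def flipG (b : Multiplicative (ZMod 2)) (G : FinDigraph) : FinDigraph :=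
  ⟨G.n, G.pos, fun u v => if u = v then xor (G.adj u v) (decide (b.toAdd = 1)) else G.adj u v⟩

theorem actN_one (G : FinDigraph) : actN 1 G = G := by
  obtain ⟨n, hn, a⟩ := G
  refine gext fun u v => ?_
  simp only [E_one]
  split_ifs <;> rfl

theorem actN_mul (m m' : NN) (G : FinDigraph) : actN (m * m') G = actN m (actN m' G) := by
  obtain ⟨n, hn, a⟩ := G
  refine gext fun u v => ?_
  simp only [actN, E_mul, if_true]
  by_cases h : u = v
  · simp [h]
  · have h' : ¬ v = u := fun e => h e.symm
    simp only [h, h', if_false]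
    have := E_swap m' (a u u) (a v v) (a u v, a v u)
    simp only [Prod.swap_prod_mk] at this
    rw [this]
    rfl

theorem z2 : ∀ b : Multiplicative (ZMod 2), b = 1 ∨ b = Multiplicative.ofAdd 1 := by decide

theorem flip_one (G : FinDigraph) : flipG 1 G = G := by
  obtain ⟨n, hn, a⟩ := G
  refine gext fun u v => ?_
  simp

theorem z2x : ∀ b b' : Multiplicative (ZMod 2), decide ((b * b').toAdd = 1) =
    xor (decide (b'.toAdd = 1)) (decide (b.toAdd = 1)) := by decide

theorem flip_mul (b b' : Multiplicative (ZMod 2)) (G : FinDigraph) :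
    flipG (b * b') G = flipG b (flipG b' G) := by
  obtain ⟨n, hn, a⟩ := G
  refine gext fun u v => ?_
  simp only [flipG, z2x]
  split_ifs <;> simp

section
variable (α : Multiplicative (ZMod 2) →* MulAut NN)
    (hα : ∀ (p q r s : ZMod 2) (π : Equiv.Perm (Bool × Bool)),
      α (Multiplicative.ofAdd (1 : ZMod 2)) (Multiplicative.ofAdd (p, q, r, s), π)
        = (Multiplicative.ofAdd (q, p, s, r), sigmaSwap * π * sigmaSwap))

include hα in
theorem E_alpha (n : NN) (a b : Bool) (t : Bool × Bool) :
    E (α (Multiplicative.ofAdd 1) n) (!a) (!b) t = E n a b t := by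
  obtain ⟨m, π⟩ := n
  obtain ⟨⟨p, q, r, s⟩, rfl⟩ : ∃ m', m = Multiplicative.ofAdd m' := ⟨m.toAdd, rfl⟩
  rw [hα]
  cases a <;> cases b <;> simp [E, sigmaSwap]

include hα in
theorem flip_act (b : Multiplicative (ZMod 2)) (m : NN) (G : FinDigraph) :
    flipG b (actN m G) = actN (α b m) (flipG b G) := by
  rcases z2 b with rfl | rfl
  · simp [flip_one]
  · obtain ⟨n, hn, a⟩ := G
    refine gext fun u v => ?_
    change Fin n at u v
    simp only [flipG, actN]
    by_cases h : u = v
    · simp [h]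
    · have h' : ¬ v = u := fun e => h e.symm
      simp [h, h', E_alpha α hα]

abbrev SD := NN ⋊[α] Multiplicative (ZMod 2)

def act (k : SD α) (G : FinDigraph) : FinDigraph := actN k.left (flipG k.right G)

theorem act_n (k : SD α) (G : FinDigraph) : (act α k G).n = G.n := rfl

theorem act_one (G : FinDigraph) : act α 1 G = G := by
  simp [act, flip_one, actN_one]

include hα in
theorem act_mul (k l : SD α) (G : FinDigraph) : act α (k * l) G = act α k (act α l G) := by
  simp only [act, SemidirectProduct.mul_left, SemidirectProduct.mul_right, actN_mul, flip_mul,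
    flip_act α hα]

def adjF (m : NN) (b : Multiplicative (ZMod 2)) {n : ℕ} (a : Fin n → Fin n → Bool) (u v : Fin n) :
    Bool :=
  if u = v then xor (a u v) (decide (b.toAdd = 1)) else
    (E m (xor (a u u) (decide (b.toAdd = 1))) (xor (a v v) (decide (b.toAdd = 1))) (a u v, a v u)).1

theorem act_adj (k : SD α) (G : FinDigraph) (u v : Fin G.n) :
    (act α k G).adj u v = adjF k.left k.right G.adj u v := by
  change (if u = v then (if u = v then xor (G.adj u v) _ else G.adj u v) else
    (E k.left (if u = u then xor (G.adj u u) _ else _) (if v = v then xor (G.adj v v) _ else _)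
      (if u = v then _ else G.adj u v, if v = u then _ else G.adj v u)).1) = _
  unfold adjF
  by_cases h : u = v
  · rw [if_pos h, if_pos h, if_pos h]
  · have h' : ¬ v = u := fun e => h e.symm
    rw [if_neg h, if_neg h, if_neg h, if_neg h', if_pos rfl, if_pos rfl]

theorem adjF_emb (m : NN) (b : Multiplicative (ZMod 2)) {n n' : ℕ} (a : Fin n → Fin n → Bool)
    (a' : Fin n' → Fin n' → Bool) (f : Fin n ↪ Fin n') (hf : ∀ u v, a' (f u) (f v) = a u v)
    (u v : Fin n) : adjF m b a' (f u) (f v) = adjF m b a u v := by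
  simp only [adjF, hf, f.injective.eq_iff]

theorem act_emb (k : SD α) {G H : FinDigraph} (h : Emb G H) : Emb (act α k G) (act α k H) := by
  obtain ⟨f, hf⟩ := h
  exact ⟨f, fun u v => (act_adj α k H (f u) (f v)).trans
    ((adjF_emb _ _ _ _ f hf u v).trans (act_adj α k G u v).symm)⟩

theorem act_iso (k : SD α) {G H : FinDigraph} (h : Iso G H) : Iso (act α k G) (act α k H) := by
  have h1 := emb_n_le (emb_of_iso (iso_symm h))
  exact iso_of_emb (act_emb α k (emb_of_iso h)) h1

def actD (k : SD α) : D → D := Quotient.map (act α k) (fun _ _ h => act_iso α k h)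

theorem actD_toD (k : SD α) (G : FinDigraph) : actD α k (toD G) = toD (act α k G) := rfl

theorem nVerts_actD (k : SD α) (x : D) : nVerts (actD α k x) = nVerts x := by
  obtain ⟨G, rfl⟩ := exists_rep x
  rfl

theorem actD_one (x : D) : actD α 1 x = x := by
  obtain ⟨G, rfl⟩ := exists_rep x
  rw [actD_toD, act_one]

include hα in
theorem actD_mul (k l : SD α) (x : D) : actD α (k * l) x = actD α k (actD α l x) := by
  obtain ⟨G, rfl⟩ := exists_rep x
  simp only [actD_toD, act_mul α hα]

theorem actD_mono (k : SD α) {x y : D} (h : x ≤ y) : actD α k x ≤ actD α k y := by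
  obtain ⟨G, rfl⟩ := exists_rep x
  obtain ⟨H, rfl⟩ := exists_rep y
  exact toD_le.2 (act_emb α k (toD_le.1 h))

include hα in
theorem actD_le (k : SD α) {x y : D} : actD α k x ≤ actD α k y ↔ x ≤ y := by
  refine ⟨fun h => ?_, actD_mono α k⟩
  have := actD_mono α k⁻¹ h
  rwa [← actD_mul α hα, ← actD_mul α hα, inv_mul_cancel, actD_one, actD_one] at this

def Phi (m : ℕ) : SD α →* (↥(Dn m) ≃o ↥(Dn m)) where
  toFun k :=
    { toFun := fun x => ⟨actD α k x.1, (nVerts_actD α k x.1).trans_le x.2⟩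
      invFun := fun x => ⟨actD α k⁻¹ x.1, (nVerts_actD α k⁻¹ x.1).trans_le x.2⟩
      left_inv := fun x => Subtype.ext (by
        change actD α k⁻¹ (actD α k x.1) = x.1
        rw [← actD_mul α hα, inv_mul_cancel, actD_one])
      right_inv := fun x => Subtype.ext (by
        change actD α k (actD α k⁻¹ x.1) = x.1
        rw [← actD_mul α hα, mul_inv_cancel, actD_one])
      map_rel_iff' := actD_le α hα k }
  map_one' := by
    ext x
    exact actD_one α x.1
  map_mul' k l := by
    ext x
    exact actD_mul α hα k l x.1

theorem Phi_apply (m : ℕ) (k : SD α) (x : ↥(Dn m)) : (Phi α hα m k x).1 = actD α k x.1 := rfl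

theorem Phi_mem (k : SD α) : Phi α hα 3 k ∈ Aut3D4Iso :=
  ⟨Phi α hα 4 k, ⟨(Phi α hα 4 k).bijective, fun _ _ => ((Phi α hα 4 k).le_iff_le).symm⟩,
    fun _ => rfl⟩

/-! ### values -/

theorem actD_P (k : SD α) (n c d : ℕ) (h : ∀ i j : Fin (n + 1), (act α k (mk n c)).adj i j = (mk n d).adj i j) :
    actD α k (P n c) = P n d := by
  refine toD_eq.2 ⟨Equiv.refl (Fin (n + 1)), fun u v => (h u v).symm⟩

end

end PF

namespace PF

open FinDigraph

theorem M22 : ∀ e < 512, T3 e = e → M e = M 22 → e = 22 ∨ e = 70 := by decide +kernel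
theorem M287 : ∀ e < 512, T3 e = e → M e = M 287 → e = 287 ∨ e = 335 := by decide +kernel
theorem T22 : T3 22 = 22 ∧ T3 70 = 70 ∧ T3 287 = 287 ∧ T3 335 = 335 := by decide +kernel

def cd (t : Bool × Bool) : ℕ := 1 + 2 * t.1.toNat + 4 * t.2.toNat

theorem cd_mem : ∀ t, cd t ∈ [1, 3, 5, 7] := by decide
theorem cd_mem' : ∀ t, cd t ∈ [0, 1, 2, 3, 5, 6, 7, 9, 11, 15] := by decide
theorem cd_surj : ∀ e ∈ [1, 3, 5, 7], ∃ t, e = cd t := by decide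
theorem cd_inj : ∀ t t', cd t = cd t' → t = t' := by decide

section
variable (α : Multiplicative (ZMod 2) →* MulAut NN)
    (hα : ∀ (p q r s : ZMod 2) (π : Equiv.Perm (Bool × Bool)),
      α (Multiplicative.ofAdd (1 : ZMod 2)) (Multiplicative.ofAdd (p, q, r, s), π)
        = (Multiplicative.ofAdd (q, p, s, r), sigmaSwap * π * sigmaSwap))

theorem actD_P' (k : SD α) (n c d : ℕ) (h : ∀ i j : Fin (n + 1),
    adjF k.left k.right (fun i j : Fin (n + 1) => c.testBit (Nat.pair i.1 j.1)) i j
      = d.testBit (Nat.pair i.1 j.1)) : actD α k (P n c) = P n d :=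
  actD_P α k n c d (fun i j => (act_adj α k (mk n c) i j).trans (h i j))

/-- a group element from its coordinates -/
def el (p q r s : ZMod 2) (π : Equiv.Perm (Bool × Bool)) (b : ZMod 2) : SD α :=
  ⟨(Multiplicative.ofAdd (p, q, r, s), π), Multiplicative.ofAdd b⟩

theorem val0 (p q r s π) : actD α (el α p q r s π 0) (P 0 0) = P 0 0 := by
  refine actD_P' α _ _ _ _ fun i j => ?_
  fin_cases i <;> fin_cases j <;> rfl

theorem val0' (p q r s π) : actD α (el α p q r s π 1) (P 0 0) = P 0 1 := by
  refine actD_P' α _ _ _ _ fun i j => ?_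
  fin_cases i <;> fin_cases j <;> rfl

theorem valN (q r s π) : actD α (el α 0 q r s π 0) (P 1 0) = P 1 0 := by
  refine actD_P' α _ _ _ _ fun i j => ?_
  fin_cases i <;> fin_cases j <;> rfl

theorem valN1 (q r s π) : actD α (el α 1 q r s π 0) (P 1 0) = P 1 6 := by
  refine actD_P' α _ _ _ _ fun i j => ?_
  fin_cases i <;> fin_cases j <;> rfl

theorem valL (p r s π) : actD α (el α p 0 r s π 0) (P 1 9) = P 1 9 := by
  refine actD_P' α _ _ _ _ fun i j => ?_
  fin_cases i <;> fin_cases j <;> rfl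

theorem valL1 (p r s π) : actD α (el α p 1 r s π 0) (P 1 9) = P 1 15 := by
  refine actD_P' α _ _ _ _ fun i j => ?_
  fin_cases i <;> fin_cases j <;> rfl

theorem valM (p q r s π t) : actD α (el α p q r s π 0) (P 1 (cd t)) = P 1 (cd (π t)) := by
  refine actD_P' α _ _ _ _ fun i j => ?_
  obtain ⟨x, y⟩ := t
  cases x <;> cases y <;> fin_cases i <;> fin_cases j <;>
  · first
    | rfl
    | (generalize hw : π _ = w
       obtain ⟨x, y⟩ := w
       have h1 := congrArg Prod.fst hw
       have h2 := congrArg Prod.snd hw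
       cases x <;> cases y <;> first | exact h1 | exact h2 | rfl)

theorem valT (q s π) : actD α (el α 0 q 0 s π 0) (P 2 22) = P 2 22 := by
  refine actD_P' α _ _ _ _ fun i j => ?_
  fin_cases i <;> fin_cases j <;> rfl

theorem valT1 (q s π) : actD α (el α 0 q 1 s π 0) (P 2 22) = P 2 70 := by
  refine actD_P' α _ _ _ _ fun i j => ?_
  fin_cases i <;> fin_cases j <;> rfl

theorem valU (p r π) : actD α (el α p 0 r 0 π 0) (P 2 287) = P 2 287 := by
  refine actD_P' α _ _ _ _ fun i j => ?_
  fin_cases i <;> fin_cases j <;> rfl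

theorem valU1 (p r π) : actD α (el α p 0 r 1 π 0) (P 2 287) = P 2 335 := by
  refine actD_P' α _ _ _ _ fun i j => ?_
  fin_cases i <;> fin_cases j <;> rfl

theorem zz : ∀ a : ZMod 2, a = 0 ∨ a = 1 := by decide

theorem P2_ne_a : P 2 22 ≠ P 2 70 := by
  rw [Ne, P2_eq (by norm_num) (by norm_num), T22.1, T22.2.1]; norm_num

theorem P2_ne_b : P 2 287 ≠ P 2 335 := by
  rw [Ne, P2_eq (by norm_num) (by norm_num), T22.2.2.1, T22.2.2.2]; norm_num

theorem el_surj (k : SD α) : ∃ p q r s π b, k = el α p q r s π b :=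
  ⟨k.left.1.toAdd.1, k.left.1.toAdd.2.1, k.left.1.toAdd.2.2.1, k.left.1.toAdd.2.2.2, k.left.2,
    k.right.toAdd, rfl⟩

theorem Phi_inj : Function.Injective (Phi α hα 3) := by
  rw [injective_iff_map_eq_one]
  intro k hk
  have key : ∀ x : ↥(Dn 3), actD α k x.1 = x.1 := fun x => by
    rw [← Phi_apply α hα, hk]; rfl
  have key' : ∀ n c, n < 3 → actD α k (P n c) = P n c := fun n c h => key ⟨P n c, P_mem c h⟩
  obtain ⟨p, q, r, s, π, b, rfl⟩ := el_surj α k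
  have h0 := key' 0 0 (by norm_num)
  rcases zz b with rfl | rfl
  swap
  · rw [val0'] at h0; exact absurd h0.symm P0_inj
  have h1 := key' 1 0 (by norm_num)
  rcases zz p with rfl | rfl
  swap
  · rw [valN1, P1_ne (by simp) (by simp)] at h1; norm_num at h1
  have h2 := key' 1 9 (by norm_num)
  rcases zz q with rfl | rfl
  swap
  · rw [valL1, P1_ne (by simp) (by simp)] at h2; norm_num at h2
  have h3 := key' 2 22 (by norm_num)
  rcases zz r with rfl | rfl
  swap
  · rw [valT1] at h3; exact absurd h3.symm P2_ne_a
  have h4 := key' 2 287 (by norm_num)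
  rcases zz s with rfl | rfl
  swap
  · rw [valU1] at h4; exact absurd h4.symm P2_ne_b
  have hp : π = 1 := by
    ext1 t
    have h5 := key' 1 (cd t) (by norm_num)
    rw [valM, P1_ne (cd_mem' _) (cd_mem' _)] at h5
    exact cd_inj _ _ h5
  rw [hp]
  rfl

theorem D2fix {g : ↥(Dn 3) ≃o ↥(Dn 3)} (hg : g ∈ Aut3D4Iso)
    (h : (g ⟨P 0 0, P_mem _ (by norm_num)⟩).1 = P 0 0)
    (h0 : (g ⟨P 1 0, P_mem _ (by norm_num)⟩).1 = P 1 0)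
    (h9 : (g ⟨P 1 9, P_mem _ (by norm_num)⟩).1 = P 1 9)
    (hm : ∀ t, (g ⟨P 1 (cd t), P_mem _ (by norm_num)⟩).1 = P 1 (cd t))
    (x : ↥(Dn 3)) (hx : nVerts x.1 ≤ 2) : g x = x := by
  obtain ⟨F, hF, hgF⟩ := exists_good hg
  rw [hgF] at h h0 h9
  have hm' : ∀ d ∈ [1, 3, 5, 7], F (P 1 d) = P 1 d := by
    intro d hd
    obtain ⟨t, rfl⟩ := cd_surj d hd
    rw [← hgF ⟨P 1 (cd t), P_mem _ (by norm_num)⟩, hm]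
  have h2 := fixD2 hF h h0 h9 hm'
  apply Subtype.ext
  rw [hgF]
  have hp := nVerts_pos x.1
  obtain hx1 | hx1 : nVerts x.1 = 0 + 1 ∨ nVerts x.1 = 1 + 1 := by omega
  · obtain ⟨c, hc, h'⟩ := exists_P hx1
    rw [h']
    have hc : c < 2 := by simpa using hc
    interval_cases c
    · exact h
    · exact P0_one hF h
  · obtain ⟨c, hc, h'⟩ := exists_P hx1
    rw [h']
    exact h2 c (by simpa using hc)

variable (C : Subgroup (↥(Dn 3) ≃o ↥(Dn 3))) (hC : (C : Set (↥(Dn 3) ≃o ↥(Dn 3))) = Aut3D4Iso)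

include hC in
theorem mem_C {g : ↥(Dn 3) ≃o ↥(Dn 3)} : g ∈ C ↔ g ∈ Aut3D4Iso := by
  rw [← hC]; rfl

theorem quot_fix {g h : ↥(Dn 3) ≃o ↥(Dn 3)} {x : ↥(Dn 3)} (e : g x = h x) : (g⁻¹ * h) x = x := by
  change g.symm (h x) = x
  rw [← e, OrderIso.symm_apply_apply]

theorem two_val {g : ↥(Dn 3) ≃o ↥(Dn 3)} (hg : g ∈ Aut3D4Iso)
    (h2 : ∀ x : ↥(Dn 3), nVerts x.1 ≤ 2 → g x = x) :
    ((g ⟨P 2 22, P_mem _ (by norm_num)⟩).1 = P 2 22 ∨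
      (g ⟨P 2 22, P_mem _ (by norm_num)⟩).1 = P 2 70) ∧
    ((g ⟨P 2 287, P_mem _ (by norm_num)⟩).1 = P 2 287 ∨
      (g ⟨P 2 287, P_mem _ (by norm_num)⟩).1 = P 2 335) := by
  obtain ⟨F, hF, hgF⟩ := exists_good hg
  have h1 : ∀ d < 16, F (P 1 d) = P 1 d := by
    intro d _
    rw [← hgF ⟨P 1 d, P_mem _ (by norm_num)⟩, h2 _ (by simp [nVerts_P])]
  rw [hgF, hgF]
  constructor
  · obtain ⟨d, hd, hd', h⟩ := exists_canon hF 22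
    rcases M22 d hd hd' (M_pres hF h1 (by norm_num) hd h) with rfl | rfl
    · exact Or.inl h
    · exact Or.inr h
  · obtain ⟨d, hd, hd', h⟩ := exists_canon hF 287
    rcases M287 d hd hd' (M_pres hF h1 (by norm_num) hd h) with rfl | rfl
    · exact Or.inl h
    · exact Or.inr h

include hC in
theorem step3 {g : ↥(Dn 3) ≃o ↥(Dn 3)} (hg : g ∈ C)
    (h2 : ∀ x : ↥(Dn 3), nVerts x.1 ≤ 2 → g x = x) : ∃ k, Phi α hα 3 k = g := by
  obtain ⟨ha, hb⟩ := two_val ((mem_C C hC).1 hg) h2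
  obtain ⟨r, hr⟩ : ∃ r, ∀ s, actD α (el α 0 0 r s 1 0) (P 2 22) =
      (g ⟨P 2 22, P_mem _ (by norm_num)⟩).1 := by
    rcases ha with ha | ha
    · exact ⟨0, fun s => by rw [ha, valT]⟩
    · exact ⟨1, fun s => by rw [ha, valT1]⟩
  obtain ⟨s, hs⟩ : ∃ s, actD α (el α 0 0 r s 1 0) (P 2 287) =
      (g ⟨P 2 287, P_mem _ (by norm_num)⟩).1 := by
    rcases hb with hb | hb
    · exact ⟨0, by rw [hb, valU]⟩
    · exact ⟨1, by rw [hb, valU1]⟩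
  refine ⟨el α 0 0 r s 1 0, ?_⟩
  have hmem : (Phi α hα 3 (el α 0 0 r s 1 0))⁻¹ * g ∈ Aut3D4Iso :=
    (mem_C C hC).1 (C.mul_mem (C.inv_mem ((mem_C C hC).2 (Phi_mem α hα _))) hg)
  rw [← inv_mul_eq_one]
  have e : ∀ n c (h : n < 3), actD α (el α 0 0 r s 1 0) (P n c) = (g ⟨P n c, P_mem c h⟩).1 →
      (((Phi α hα 3 (el α 0 0 r s 1 0))⁻¹ * g) ⟨P n c, P_mem c h⟩).1 = P n c := by
    intro n c h h'
    rw [quot_fix (Subtype.ext ((Phi_apply α hα 3 _ _).trans h'))]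
  have e2 : ∀ n c, n < 2 → ∀ h : n < 3, (g ⟨P n c, P_mem c h⟩).1 = P n c := by
    intro n c hn h
    rw [h2 _ (by simp only [nVerts_P]; omega)]
  apply core_g hmem
  · refine D2fix hmem ?_ ?_ ?_ ?_
    · exact e _ _ (by norm_num) (by rw [val0, e2 _ _ (by norm_num) (by norm_num)])
    · exact e _ _ (by norm_num) (by rw [valN, e2 _ _ (by norm_num) (by norm_num)])
    · exact e _ _ (by norm_num) (by rw [valL, e2 _ _ (by norm_num) (by norm_num)])
    · intro t
      exact e _ _ (by norm_num) (by rw [valM, e2 _ _ (by norm_num) (by norm_num)]; rfl)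
  · exact e _ _ (by norm_num) (hr s)
  · exact e _ _ (by norm_num) hs

include hC in
theorem step2 {g : ↥(Dn 3) ≃o ↥(Dn 3)} (hg : g ∈ C)
    (h : (g ⟨P 0 0, P_mem _ (by norm_num)⟩).1 = P 0 0) : ∃ k, Phi α hα 3 k = g := by
  obtain ⟨F, hF, hgF⟩ := exists_good ((mem_C C hC).1 hg)
  rw [hgF] at h
  obtain ⟨p, hp⟩ : ∃ p, ∀ q π, actD α (el α p q 0 0 π 0) (P 1 0) = F (P 1 0) := by
    rcases lev2_N hF h (Or.inl rfl) with ha | ha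
    · exact ⟨0, fun q π => by rw [ha, valN]⟩
    · exact ⟨1, fun q π => by rw [ha, valN1]⟩
  obtain ⟨q, hq⟩ : ∃ q, ∀ π, actD α (el α p q 0 0 π 0) (P 1 9) = F (P 1 9) := by
    rcases lev2_N' hF h (Or.inl rfl) with ha | ha
    · exact ⟨0, fun π => by rw [ha, valL]⟩
    · exact ⟨1, fun π => by rw [ha, valL1]⟩
  have hf : ∀ t, ∃ w, F (P 1 (cd t)) = P 1 (cd w) := by
    intro t
    obtain ⟨e, he, h'⟩ := lev2_mixed hF h (cd_mem t)
    obtain ⟨w, rfl⟩ := cd_surj e he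
    exact ⟨w, h'⟩
  choose f hf using hf
  have hinj : Function.Injective f := by
    intro t t' ht
    have h1 := hf t
    have h2 := hf t'
    rw [ht] at h1
    exact cd_inj _ _ (P1_inj hF h1 h2 (cd_mem' _) (cd_mem' _))
  obtain ⟨π, hπ⟩ : ∃ π : Equiv.Perm (Bool × Bool), ∀ t, π t = f t :=
    ⟨Equiv.ofBijective f (Finite.injective_iff_bijective.1 hinj), fun t => rfl⟩
  have hmem : (Phi α hα 3 (el α p q 0 0 π 0))⁻¹ * g ∈ C :=
    C.mul_mem (C.inv_mem ((mem_C C hC).2 (Phi_mem α hα _))) hg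
  have e : ∀ n c (h : n < 3), actD α (el α p q 0 0 π 0) (P n c) = F (P n c) →
      (((Phi α hα 3 (el α p q 0 0 π 0))⁻¹ * g) ⟨P n c, P_mem c h⟩).1 = P n c := by
    intro n c h h'
    rw [quot_fix (Subtype.ext ((Phi_apply α hα 3 _ _).trans (h'.trans (hgF ⟨P n c, P_mem c h⟩).symm)))]
  have h2 := D2fix ((mem_C C hC).1 hmem) (e _ _ (by norm_num) (by rw [val0, h])) (e _ _ (by norm_num) (hp q π))
    (e _ _ (by norm_num) (hq π)) (fun t => e _ _ (by norm_num) (by rw [valM, hf, hπ]))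
  obtain ⟨k, hk⟩ := step3 α hα C hC hmem h2
  refine ⟨el α p q 0 0 π 0 * k, ?_⟩
  rw [map_mul, hk, mul_inv_cancel_left]

include hC in
theorem step1 {g : ↥(Dn 3) ≃o ↥(Dn 3)} (hg : g ∈ C) : ∃ k, Phi α hα 3 k = g := by
  obtain ⟨F, hF, hgF⟩ := exists_good ((mem_C C hC).1 hg)
  rcases exists_P0 hF 0 with h | h
  · exact step2 α hα C hC hg (by rw [hgF, h])
  · have hmem : (Phi α hα 3 (el α 0 0 0 0 1 1))⁻¹ * g ∈ C :=
      C.mul_mem (C.inv_mem ((mem_C C hC).2 (Phi_mem α hα _))) hg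
    obtain ⟨k, hk⟩ := step2 α hα C hC hmem (by
      rw [quot_fix (Subtype.ext ((Phi_apply α hα 3 _ _).trans ?_))]
      rw [hgF, h, val0'])
    refine ⟨el α 0 0 0 0 1 1 * k, ?_⟩
    rw [map_mul, hk, mul_inv_cancel_left]

include hα hC in
theorem part1 : Nonempty (↥C ≃* SD α) := by
  let f : SD α →* ↥C := (Phi α hα 3).codRestrict C (fun k => (mem_C C hC).2 (Phi_mem α hα k))
  have hf : Function.Bijective f := by
    constructor
    · intro k l h
      exact Phi_inj α hα (congrArg Subtype.val h)
    · rintro ⟨g, hg⟩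
      obtain ⟨k, hk⟩ := step1 α hα C hC hg
      exact ⟨k, Subtype.ext hk⟩
  exact ⟨(MulEquiv.ofBijective f hf).symm⟩

open Classical in
include hC in
theorem part2 : {g ∈ Aut3D4Iso | ∀ x : ↥(Dn 3), nVerts ↑x ≤ 2 → g x = x}.Finite ∧
      {g ∈ Aut3D4Iso | ∀ x : ↥(Dn 3), nVerts ↑x ≤ 2 → g x = x}.ncard ≤ 4 := by
  set S := {g ∈ Aut3D4Iso | ∀ x : ↥(Dn 3), nVerts ↑x ≤ 2 → g x = x} with hS
  let f : (↥(Dn 3) ≃o ↥(Dn 3)) → Bool × Bool := fun g =>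
    (decide ((g ⟨P 2 22, P_mem _ (by norm_num)⟩).1 = P 2 22),
      decide ((g ⟨P 2 287, P_mem _ (by norm_num)⟩).1 = P 2 287))
  have hinj : Set.InjOn f S := by
    rintro g ⟨hg, hg2⟩ h ⟨hh, hh2⟩ e
    obtain ⟨e1, e2⟩ := Prod.mk.inj e
    rw [decide_eq_decide] at e1 e2
    obtain ⟨a1, a2⟩ := two_val hg hg2
    obtain ⟨b1, b2⟩ := two_val hh hh2
    have c1 : (g ⟨P 2 22, P_mem _ (by norm_num)⟩).1 = (h ⟨P 2 22, P_mem _ (by norm_num)⟩).1 := by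
      rcases a1 with a1 | a1
      · rw [a1, e1.1 a1]
      · rcases b1 with b1 | b1
        · rw [b1, e1.2 b1]
        · rw [a1, b1]
    have c2 : (g ⟨P 2 287, P_mem _ (by norm_num)⟩).1 = (h ⟨P 2 287, P_mem _ (by norm_num)⟩).1 := by
      rcases a2 with a2 | a2
      · rw [a2, e2.1 a2]
      · rcases b2 with b2 | b2
        · rw [b2, e2.2 b2]
        · rw [a2, b2]
    have hmem : g⁻¹ * h ∈ Aut3D4Iso :=
      (mem_C C hC).1 (C.mul_mem (C.inv_mem ((mem_C C hC).2 hg)) ((mem_C C hC).2 hh))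
    rw [← inv_mul_eq_one]
    apply core_g hmem
    · intro x hx
      exact quot_fix (by rw [hg2 x hx, hh2 x hx])
    · rw [quot_fix (Subtype.ext c1)]
    · rw [quot_fix (Subtype.ext c2)]
  refine ⟨Set.Finite.of_injOn (Set.mapsTo_univ f S) hinj Set.finite_univ, ?_⟩
  have := Set.ncard_le_ncard_of_injOn f (t := Set.univ) (fun _ _ => Set.mem_univ _) hinj
  simpa [Set.ncard_univ] using this

end

end PF
/-- the group `Aut₃(D₄)` is isomorphic to
`((ZMod 2)⁴ × Perm (Bool × Bool)) ⋊_α (ZMod 2)` with `α 1 : (p,q,r,s,π) ↦ (q,p,s,r,σπσ)`,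
and at most four of its elements fix every digraph with at most 2 vertices. -/
theorem aut3D4_structure
    (α : Multiplicative (ZMod 2) →*
      MulAut (Multiplicative (ZMod 2 × ZMod 2 × ZMod 2 × ZMod 2) × Equiv.Perm (Bool × Bool)))
    (hα : ∀ (p q r s : ZMod 2) (π : Equiv.Perm (Bool × Bool)),
      α (Multiplicative.ofAdd (1 : ZMod 2)) (Multiplicative.ofAdd (p, q, r, s), π)
        = (Multiplicative.ofAdd (q, p, s, r), sigmaSwap * π * sigmaSwap))
    (C : Subgroup (↥(Dn 3) ≃o ↥(Dn 3))) (hC : (C : Set (↥(Dn 3) ≃o ↥(Dn 3))) = Aut3D4Iso) :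
    Nonempty (↥C ≃*
      (Multiplicative (ZMod 2 × ZMod 2 × ZMod 2 × ZMod 2) × Equiv.Perm (Bool × Bool))
        ⋊[α] Multiplicative (ZMod 2)) ∧
    ({g ∈ Aut3D4Iso | ∀ x : ↥(Dn 3), nVerts ↑x ≤ 2 → g x = x}.Finite ∧
      {g ∈ Aut3D4Iso | ∀ x : ↥(Dn 3), nVerts ↑x ≤ 2 → g x = x}.ncard ≤ 4) := by
  exact ⟨PF.part1 α hα C hC, PF.part2 C hC⟩
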